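/- arXiv:1203.2391 — 12 statements merged into one kernel-verified Lean document; each statement's English description precedes it below -/
import Mathlib

section
/- Let θ : S → R be a ring extension. Then the following three statements are equivalent: (1) the left S-module R is reflexive and there is an isomorphism Hom_S(R,S) ≅ R of R-S-bimodules; (2) there exists a reflexive homomorphism for θ, i.e. an additive map φ : R → S with φ(θ(s)r) = sφ(r) and φ(rθ(s)) = φ(r)s for all s ∈ S, r ∈ R, such that both induced maps l_φ : R → Hom_S(R,S), l_φ(w)(r) = φ(rw), and r_φ : R → Hom_{Sᵒᵖ}(R,S), r_φ(w)(r) = φ(wr), are bijective; (3) the right S-module R is reflexive and there is an isomorphism Hom_{Sᵒᵖ}(R,S) ≅ R of S-R-bimodules. -/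
/- STATEMENT 0: For a ring extension θ : S → R, the following are equivalent:
(1) the left S-module R is reflexive and Hom_S(R,S) ≅ R as R-S-bimodules;
(2) there is a reflexive homomorphism φ : R → S for θ;
(3) the right S-module R is reflexive and Hom_{Sᵒᵖ}(R,S) ≅ R as S-R-bimodules. -/

universe u v

/-- The evaluation map `X → Hom_{Sᵒᵖ}(Hom_S(X,S), S)`, `x ↦ (f ↦ f x)`. -/
def evalFun (S : Type u) [Ring S] (X : Type v) [AddCommGroup X] [Module S X] :
    X → ((X →ₗ[S] S) →ₗ[Sᵐᵒᵖ] S) := fun x =>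
  { toFun := fun f => f x
    map_add' := fun _ _ => rfl
    map_smul' := fun _ _ => rfl }

/-- A left `S`-module is reflexive if the evaluation map into its double dual is bijective. -/
def IsReflexiveMod (S : Type u) [Ring S] (X : Type v) [AddCommGroup X] [Module S X] : Prop :=
  Function.Bijective (evalFun S X)

/-- `φ : R → S` is a reflexive homomorphism for the ring extension `θ : S →+* R`:
it is additive, `S`-bilinear with respect to `θ`, and the induced maps
`l_φ : R → Hom_S(R,S)`, `w ↦ (r ↦ φ (r * w))`, and `r_φ : R → Hom_{Sᵒᵖ}(R,S)`,
`w ↦ (r ↦ φ (w * r))`, are bijective (bijectivity onto the set of left,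
resp. right, `S`-linear maps `R → S` is expressed elementwise). -/
def IsReflexiveHom {S : Type u} {R : Type v} [Ring S] [Ring R] (θ : S →+* R)
    (φ : R → S) : Prop :=
  (∀ a b : R, φ (a + b) = φ a + φ b) ∧
  (∀ (s : S) (r : R), φ (θ s * r) = s * φ r) ∧
  (∀ (s : S) (r : R), φ (r * θ s) = φ r * s) ∧
  Function.Injective (fun w : R => (fun r : R => φ (r * w))) ∧
  (∀ g : R → S, ((∀ a b : R, g (a + b) = g a + g b) ∧
      ∀ (s : S) (r : R), g (θ s * r) = s * g r) → ∃ w : R, ∀ r, g r = φ (r * w)) ∧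
  Function.Injective (fun w : R => (fun r : R => φ (w * r))) ∧
  (∀ g : R → S, ((∀ a b : R, g (a + b) = g a + g b) ∧
      ∀ (s : S) (r : R), g (r * θ s) = g r * s) → ∃ w : R, ∀ r, g r = φ (w * r))

theorem reflexive_extension_symmetry
    (S : Type u) (R : Type v) [Ring S] [Ring R] (θ : S →+* R)
    [Module S R] (hR : ∀ (s : S) (r : R), s • r = θ s * r)
    [Module Sᵐᵒᵖ R] (hR' : ∀ (s : S) (r : R), MulOpposite.op s • r = r * θ s) :
    -- (1) ↔ (2)
    (((IsReflexiveMod S R) ∧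
      -- an R-S-bimodule isomorphism Hom_S(R,S) ≅ R
      ∃ Φ : (R →ₗ[S] S) → R, Function.Bijective Φ ∧
        (∀ f g : R →ₗ[S] S, Φ (f + g) = Φ f + Φ g) ∧
        (∀ (a : R) (f g : R →ₗ[S] S), (∀ r, g r = f (r * a)) → Φ g = a * Φ f) ∧
        (∀ (s : S) (f g : R →ₗ[S] S), (∀ r, g r = f r * s) → Φ g = Φ f * θ s)) ↔
      (∃ φ : R → S, IsReflexiveHom θ φ)) ∧
    -- (2) ↔ (3)
    ((∃ φ : R → S, IsReflexiveHom θ φ) ↔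
      ((IsReflexiveMod Sᵐᵒᵖ R) ∧
      -- an S-R-bimodule isomorphism Hom_{Sᵒᵖ}(R,S) ≅ R
      ∃ Ψ : (R →ₗ[Sᵐᵒᵖ] S) → R, Function.Bijective Ψ ∧
        (∀ f g : R →ₗ[Sᵐᵒᵖ] S, Ψ (f + g) = Ψ f + Ψ g) ∧
        (∀ (s : S) (f g : R →ₗ[Sᵐᵒᵖ] S), (∀ r, g r = s * f r) → Ψ g = θ s * Ψ f) ∧
        (∀ (a : R) (f g : R →ₗ[Sᵐᵒᵖ] S), (∀ r, g r = f (a * r)) → Ψ g = Ψ f * a))) := by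
  refine ⟨⟨?_, ?_⟩, ⟨?_, ?_⟩⟩
  · rintro ⟨⟨hinj, hsurj⟩, Φ, ⟨Φi, Φs⟩, Φadd, Φl, Φr⟩
    obtain ⟨φ, hφ⟩ := Φs 1
    let F : R → (R →ₗ[S] S) := fun w =>
      { toFun := fun r => φ (r * w)
        map_add' := fun a b => by rw [add_mul, map_add]
        map_smul' := fun s a => by
          rw [hR, mul_assoc, ← hR, map_smul, RingHom.id_apply] }
    have hF : ∀ w, Φ (F w) = w := fun w => by
      rw [Φl w φ (F w) (fun r => rfl), hφ, mul_one]
    have hF' : ∀ f, F (Φ f) = f := fun f => Φi (hF _)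
    have hr : ∀ (s : S) (r : R), φ (r * θ s) = φ r * s := fun s r => by
      let g : R →ₗ[S] S :=
        { toFun := fun r => φ r * s
          map_add' := fun a b => by rw [map_add, add_mul]
          map_smul' := fun t a => by
            rw [map_smul, RingHom.id_apply, smul_eq_mul, smul_eq_mul, mul_assoc] }
      have h : F (θ s) = g := Φi (by
        rw [hF, Φr s φ g (fun r => rfl), hφ, one_mul])
      exact LinearMap.congr_fun h r
    refine ⟨φ, map_add φ, fun s r => by rw [← hR, map_smul, smul_eq_mul], hr, ?_, ?_, ?_, ?_⟩
    · intro a b h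
      rw [← hF a, ← hF b]
      congr 1
      ext r
      exact congrFun h r
    · rintro g ⟨ga, gs⟩
      let g' : R →ₗ[S] S :=
        { toFun := g, map_add' := ga, map_smul' := fun s r => by rw [hR, gs]; rfl }
      exact ⟨Φ g', fun r => (LinearMap.congr_fun (hF' g') r).symm⟩
    · intro a b h
      apply hinj
      ext f
      rw [← hF' f]
      exact congrFun h (Φ f)
    · rintro g ⟨ga, gs⟩
      let G : (R →ₗ[S] S) →ₗ[Sᵐᵒᵖ] S :=
        { toFun := fun f => g (Φ f)
          map_add' := fun a b => by rw [Φadd, ga]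
          map_smul' := fun s f => by
            rw [Φr s.unop f (s • f) (fun r => rfl), gs]; rfl }
      obtain ⟨w, hw⟩ := hsurj G
      refine ⟨w, fun r => ?_⟩
      have := LinearMap.congr_fun hw (F r)
      change φ (w * r) = g (Φ (F r)) at this
      rw [this, hF]
  · rintro ⟨φ, φa, φl, φr, li, ls, ri, rs⟩
    let F : R → (R →ₗ[S] S) := fun w =>
      { toFun := fun r => φ (r * w)
        map_add' := fun a b => by rw [add_mul, φa]
        map_smul' := fun s a => by rw [hR, mul_assoc, φl]; rfl }
    have Fi : Function.Injective F := fun a b h =>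
      li (funext fun r => LinearMap.congr_fun h r)
    have Fs : Function.Surjective F := fun f => by
      obtain ⟨w, hw⟩ := ls f ⟨map_add f, fun s r => by rw [← hR, map_smul, smul_eq_mul]⟩
      exact ⟨w, LinearMap.ext fun r => (hw r).symm⟩
    let e := Equiv.ofBijective F ⟨Fi, Fs⟩
    have he : ∀ f r, f r = φ (r * e.symm f) := fun f r =>
      (LinearMap.congr_fun (e.apply_symm_apply f) r).symm
    refine ⟨⟨?_, ?_⟩, e.symm, e.symm.bijective, ?_, ?_, ?_⟩
    · intro a b h
      apply ri
      funext r
      exact LinearMap.congr_fun h (F r)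
    · intro G
      obtain ⟨w, hw⟩ := rs (fun r => G (F r)) ⟨fun a b => by
          rw [← map_add]; congr 1; ext r
          change φ (r * (a + b)) = φ (r * a) + φ (r * b)
          rw [mul_add, φa], fun s r => by
          have : F (r * θ s) = MulOpposite.op s • F r := by
            ext x
            change φ (x * (r * θ s)) = φ (x * r) * s
            rw [← mul_assoc, φr]
          rw [this, map_smul]; rfl⟩
      refine ⟨w, LinearMap.ext fun f => ?_⟩
      obtain ⟨r, rfl⟩ := Fs f
      exact (hw r).symm
    · intro f g
      apply li; funext r
      change φ (r * _) = φ (r * _)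
      rw [mul_add, φa, ← he, ← he, ← he]; rfl
    · intro a f g h
      apply li; funext r
      change φ (r * _) = φ (r * _)
      rw [← mul_assoc, ← he, ← he, h]
    · intro s f g h
      apply li; funext r
      change φ (r * _) = φ (r * _)
      rw [← mul_assoc, φr, ← he, ← he, h]
  · rintro ⟨φ, φa, φl, φr, li, ls, ri, rs⟩
    let F : R → (R →ₗ[Sᵐᵒᵖ] S) := fun w =>
      { toFun := fun r => φ (w * r)
        map_add' := fun a b => by rw [mul_add, φa]
        map_smul' := fun s a => by
          rw [← MulOpposite.op_unop s, hR', ← mul_assoc, φr]; rfl }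
    have Fi : Function.Injective F := fun a b h =>
      ri (funext fun r => LinearMap.congr_fun h r)
    have Fs : Function.Surjective F := fun f => by
      obtain ⟨w, hw⟩ := rs f ⟨map_add f, fun s r => by rw [← hR', map_smul]; rfl⟩
      exact ⟨w, LinearMap.ext fun r => (hw r).symm⟩
    let F2 : R → (R →ₗ[Sᵐᵒᵖ] Sᵐᵒᵖ) := fun w =>
      { toFun := fun r => MulOpposite.op (φ (w * r))
        map_add' := fun a b => by rw [mul_add, φa, MulOpposite.op_add]
        map_smul' := fun s a => by
          rw [← MulOpposite.op_unop s, hR', ← mul_assoc, φr]; rfl }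
    have F2s : Function.Surjective F2 := fun f => by
      obtain ⟨w, hw⟩ := rs (fun r => (f r).unop) ⟨fun a b => by
        rw [map_add, MulOpposite.unop_add], fun s r => by rw [← hR', map_smul]; rfl⟩
      exact ⟨w, LinearMap.ext fun r => MulOpposite.unop_injective (hw r).symm⟩
    let e := Equiv.ofBijective F ⟨Fi, Fs⟩
    have he : ∀ f r, f r = φ (e.symm f * r) := fun f r =>
      (LinearMap.congr_fun (e.apply_symm_apply f) r).symm
    refine ⟨⟨?_, ?_⟩, e.symm, e.symm.bijective, ?_, ?_, ?_⟩
    · intro a b h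
      apply li
      funext r
      exact MulOpposite.op_injective (LinearMap.congr_fun h (F2 r))
    · intro G
      obtain ⟨w, hw⟩ := ls (fun r => (G (F2 r)).unop) ⟨fun a b => by
          rw [← MulOpposite.unop_add, ← map_add]; congr 2; ext r
          apply MulOpposite.unop_injective
          change φ ((a + b) * r) = φ (a * r) + φ (b * r)
          rw [add_mul, φa], fun s r => by
          have : F2 (θ s * r) = MulOpposite.op (MulOpposite.op s) • F2 r := by
            ext x
            apply MulOpposite.unop_injective
            change φ (θ s * r * x) = s * φ (r * x)
            rw [mul_assoc, φl]
          rw [this, map_smul]; rfl⟩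
      refine ⟨w, LinearMap.ext fun f => ?_⟩
      obtain ⟨r, rfl⟩ := F2s f
      exact MulOpposite.unop_injective (hw r).symm
    · intro f g
      apply ri; funext r
      change φ (_ * r) = φ (_ * r)
      rw [add_mul, φa, ← he, ← he, ← he]; rfl
    · intro s f g h
      apply ri; funext r
      change φ (_ * r) = φ (_ * r)
      rw [mul_assoc, φl, ← he, ← he, h]
    · intro a f g h
      apply ri; funext r
      change φ (_ * r) = φ (_ * r)
      rw [mul_assoc, ← he, ← he, h]
  · rintro ⟨⟨hinj, hsurj⟩, Ψ, ⟨Ψi, Ψs⟩, Ψadd, Ψl, Ψr⟩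
    obtain ⟨φ, hφ⟩ := Ψs 1
    have φr : ∀ (s : S) (r : R), φ (r * θ s) = φ r * s := fun s r => by
      rw [← hR', map_smul]; rfl
    let F : R → (R →ₗ[Sᵐᵒᵖ] S) := fun w =>
      { toFun := fun r => φ (w * r)
        map_add' := fun a b => by rw [mul_add, map_add]
        map_smul' := fun s a => by
          rw [← MulOpposite.op_unop s, hR', ← mul_assoc, φr]; rfl }
    have hF : ∀ w, Ψ (F w) = w := fun w => by
      rw [Ψr w φ (F w) (fun r => rfl), hφ, one_mul]
    have hF' : ∀ f, F (Ψ f) = f := fun f => Ψi (hF _)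
    have φl : ∀ (s : S) (r : R), φ (θ s * r) = s * φ r := fun s r => by
      let g : R →ₗ[Sᵐᵒᵖ] S :=
        { toFun := fun r => s * φ r
          map_add' := fun a b => by rw [map_add, mul_add]
          map_smul' := fun t a => by
            rw [map_smul]; exact (mul_assoc _ _ _).symm }
      have h : F (θ s) = g := Ψi (by
        rw [hF, Ψl s φ g (fun r => rfl), hφ, mul_one])
      exact LinearMap.congr_fun h r
    -- translation between maps into `S` and maps into `Sᵐᵒᵖ`
    let D : (R →ₗ[Sᵐᵒᵖ] Sᵐᵒᵖ) → (R →ₗ[Sᵐᵒᵖ] S) := fun f =>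
      { toFun := fun r => (f r).unop
        map_add' := fun a b => by rw [map_add, MulOpposite.unop_add]
        map_smul' := fun s a => by rw [map_smul]; rfl }
    let U : (R →ₗ[Sᵐᵒᵖ] S) → (R →ₗ[Sᵐᵒᵖ] Sᵐᵒᵖ) := fun f =>
      { toFun := fun r => MulOpposite.op (f r)
        map_add' := fun a b => by rw [map_add, MulOpposite.op_add]
        map_smul' := fun s a => by rw [map_smul]; rfl }
    refine ⟨φ, map_add φ, φl, φr, ?_, ?_, ?_, ?_⟩
    · intro a b h
      apply hinj
      ext f
      apply MulOpposite.unop_injective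
      change D f a = D f b
      rw [← hF' (D f)]
      exact congrFun h (Ψ (D f))
    · rintro g ⟨ga, gs⟩
      let G : (R →ₗ[Sᵐᵒᵖ] Sᵐᵒᵖ) →ₗ[Sᵐᵒᵖᵐᵒᵖ] Sᵐᵒᵖ :=
        { toFun := fun f => MulOpposite.op (g (Ψ (D f)))
          map_add' := fun a b => by
            rw [← MulOpposite.op_add, ← ga, ← Ψadd]; rfl
          map_smul' := fun s f => by
            rw [Ψl s.unop.unop (D f) (D (s • f)) (fun r => rfl), gs]; rfl }
      obtain ⟨w, hw⟩ := hsurj G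
      refine ⟨w, fun r => ?_⟩
      have := MulOpposite.op_injective (LinearMap.congr_fun hw (U (F r)))
      change φ (r * w) = g (Ψ (F r)) at this
      rw [this, hF]
    · intro a b h
      rw [← hF a, ← hF b]
      congr 1
      ext r
      exact congrFun h r
    · rintro g ⟨ga, gs⟩
      let g' : R →ₗ[Sᵐᵒᵖ] S :=
        { toFun := g, map_add' := ga
          map_smul' := fun s r => by rw [← MulOpposite.op_unop s, hR', gs]; rfl }
      exact ⟨Ψ g', fun r => (LinearMap.congr_fun (hF' g') r).symm⟩
end

section
/- Let θ : S → R be a ring extension admitting a reflexive homomorphism φ. Then for every left R-module X, the map t_X : Hom_R(X,R) → Hom_S(X,S) sending f to φ∘f is a bijection, and it is right S-linear (i.e. linear over Sᵒᵖ, where Hom_R(X,R) carries the right S-action (f·s)(x) = f(x)·θ(s) and Hom_S(X,S) carries the right S-action (g·s)(x) = g(x)s). -/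
/- STATEMENT 1: For a ring extension θ : S → R with reflexive homomorphism φ,
and any left R-module X, the map t_X : Hom_R(X,R) → Hom_S(X,S), f ↦ φ∘f,
is bijective and right S-linear. -/

universe u v w

theorem hom_iso_left {S : Type u} {R : Type v} [Ring S] [Ring R] (θ : S →+* R)
    (φ : R → S) (hφ : IsReflexiveHom θ φ)
    -- the module structures on `X` and on `R` obtained by restriction of scalars along θ
    (X : Type w) [AddCommGroup X] [Module R X]
    [Module S X] (hX : ∀ (s : S) (x : X), s • x = θ s • x)
    [Module Sᵐᵒᵖ R] (hR' : ∀ (s : S) (r : R), MulOpposite.op s • r = r * θ s)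
    [SMulCommClass R Sᵐᵒᵖ R] :
    ∃ t : (X →ₗ[R] R) → (X →ₗ[S] S),
      (∀ (f : X →ₗ[R] R) (x : X), t f x = φ (f x)) ∧
      Function.Bijective t ∧
      -- right S-linearity of t
      ∀ (c : Sᵐᵒᵖ) (f : X →ₗ[R] R), t (c • f) = c • t f := by
  obtain ⟨hadd, hl, hr, hinj, hsurj, -, -⟩ := hφ
  refine ⟨fun f =>
    { toFun := fun x => φ (f x)
      map_add' := fun x y => by rw [map_add, hadd]
      map_smul' := fun s x => by
        rw [hX, map_smul, smul_eq_mul, hl, RingHom.id_apply, smul_eq_mul] },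
    fun f x => rfl, ⟨?_, ?_⟩, ?_⟩
  · intro f g hfg
    have h : ∀ x, φ (f x) = φ (g x) := fun x => DFunLike.congr_fun hfg x
    ext x
    apply hinj
    funext r
    have := h (r • x)
    simpa only [map_smul, smul_eq_mul] using this
  · intro g
    have key : ∀ x : X, ∃ w : R, ∀ r : R, g (r • x) = φ (r * w) := fun x =>
      hsurj (fun r => g (r • x)) ⟨fun a b => by simp only [add_smul, map_add],
        fun s r => by simp only [mul_smul, ← hX, map_smul, smul_eq_mul]⟩
    choose f hf using key
    refine ⟨{ toFun := f, map_add' := ?_, map_smul' := ?_ }, ?_⟩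
    · intro x y
      apply hinj
      funext r
      simp only [mul_add, hadd, ← hf, smul_add, map_add]
    · intro a x
      apply hinj
      funext r
      simp only [RingHom.id_apply, smul_eq_mul, ← mul_assoc, ← hf, mul_smul]
    · ext x
      have := hf x 1
      rw [one_smul, one_mul] at this
      exact this.symm
  · intro c f
    ext x
    change φ (c • f x) = φ (f x) * c.unop
    rw [← hr, ← hR', MulOpposite.op_unop]
end

section
/- Let θ : S → R be a ring extension admitting a reflexive homomorphism φ. Then for every right R-module Y, the map t_Y : Hom_{Rᵒᵖ}(Y,R) → Hom_{Sᵒᵖ}(Y,S) sending g to φ∘g is a bijection, and it is left S-linear (where Hom_{Rᵒᵖ}(Y,R) carries the left S-action (s·g)(y) = θ(s)·g(y) and Hom_{Sᵒᵖ}(Y,S) carries the left S-action (s·h)(y) = s·h(y)). -/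
/- STATEMENT 2: For a ring extension θ : S → R with reflexive homomorphism φ,
and any right R-module Y, the map t_Y : Hom_{Rᵒᵖ}(Y,R) → Hom_{Sᵒᵖ}(Y,S), g ↦ φ∘g,
is bijective and left S-linear. -/

universe u v w

theorem hom_iso_right {S : Type u} {R : Type v} [Ring S] [Ring R] (θ : S →+* R)
    (φ : R → S) (hφ : IsReflexiveHom θ φ)
    -- a right R-module Y, with right S-module structure by restriction of scalars along θ
    (Y : Type w) [AddCommGroup Y] [Module Rᵐᵒᵖ Y]
    [Module Sᵐᵒᵖ Y]
    (hY : ∀ (s : S) (y : Y), MulOpposite.op s • y = MulOpposite.op (θ s) • y)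
    -- the left S-module structure on R by restriction of scalars along θ
    [Module S R] (hR : ∀ (s : S) (r : R), s • r = θ s * r)
    [SMulCommClass Rᵐᵒᵖ S R] :
    ∃ t : (Y →ₗ[Rᵐᵒᵖ] R) → (Y →ₗ[Sᵐᵒᵖ] S),
      (∀ (g : Y →ₗ[Rᵐᵒᵖ] R) (y : Y), t g y = φ (g y)) ∧
      Function.Bijective t ∧
      -- left S-linearity of t
      ∀ (s : S) (g : Y →ₗ[Rᵐᵒᵖ] R), t (s • g) = s • t g := by
  obtain ⟨hadd, hl, hr, -, -, hinj, hsurj⟩ := hφ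
  have hop : ∀ (g : Y →ₗ[Rᵐᵒᵖ] R) (r : R) (y : Y),
      g (MulOpposite.op r • y) = g y * r := by
    intro g r y
    rw [map_smul]
    rfl
  let t : (Y →ₗ[Rᵐᵒᵖ] R) → (Y →ₗ[Sᵐᵒᵖ] S) := fun g =>
    { toFun := fun y => φ (g y)
      map_add' := fun a b => by rw [map_add, hadd]
      map_smul' := fun s y => by
        induction s using MulOpposite.rec' with
        | _ s =>
          rw [hY, hop, hr]
          rfl }
  have ht : ∀ (g : Y →ₗ[Rᵐᵒᵖ] R) (y : Y), t g y = φ (g y) := fun _ _ => rfl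
  refine ⟨t, ht, ⟨?_, ?_⟩, ?_⟩
  · intro g g' h
    ext y
    apply hinj
    funext r
    have := LinearMap.congr_fun h (MulOpposite.op r • y)
    rw [ht, ht, hop, hop] at this
    exact this
  · intro h
    have hex : ∀ y : Y, ∃ w : R, ∀ r : R, h (MulOpposite.op r • y) = φ (w * r) := by
      intro y
      apply hsurj (fun r => h (MulOpposite.op r • y))
      refine ⟨fun a b => ?_, fun s r => ?_⟩
      · simp only [MulOpposite.op_add, add_smul, map_add]
      · simp only [MulOpposite.op_mul, mul_smul]
        rw [← hY, map_smul]
        rfl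
    choose f hf using hex
    refine ⟨{ toFun := f, map_add' := fun a b => ?_, map_smul' := fun r y => ?_ }, ?_⟩
    · apply hinj
      funext r
      simp only [add_mul, hadd, ← hf, smul_add, map_add]
    · induction r using MulOpposite.rec' with
      | _ r =>
        apply hinj
        funext x
        change φ (f (MulOpposite.op r • y) * x) = φ (f y * r * x)
        rw [← hf, mul_assoc, ← hf, MulOpposite.op_mul, mul_smul]
    · ext y
      change φ (f y) = h y
      have := hf y 1
      rw [mul_one, MulOpposite.op_one, one_smul] at this
      exact this.symm
  · intro s g
    ext y
    change φ (s • g y) = s * φ (g y)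
    rw [hR, hl]
end

section
/- Let θ : S → R be a reflexive extension. Then a left R-module X is reflexive as an R-module if and only if the underlying left S-module X (via restriction of scalars along θ) is reflexive as an S-module. -/
/- STATEMENT 3: For a reflexive extension θ : S → R, a left R-module X is reflexive
over R iff the underlying S-module X (restriction of scalars along θ) is reflexive. -/

universe u v w

/-- A left `S`-module is torsionless if the evaluation map into its double dual is injective. -/
def IsTorsionlessMod (S : Type u) [Ring S] (X : Type v) [AddCommGroup X] [Module S X] : Prop :=
  Function.Injective (evalFun S X)

/-- A ring extension `θ : S →+* R` (where the `S`-module structure on `R` is given by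
restriction of scalars along `θ`, i.e. `s • r = θ s * r`) is a reflexive extension if the
left `S`-module `R` is reflexive and there is an isomorphism `Hom_S(R,S) ≅ R` of
`R`-`S`-bimodules, where `Hom_S(R,S)` carries the left `R`-action `(a·f)(r) = f (r * a)`
and the right `S`-action `(f·s)(r) = f r * s`, and the right `S`-action on `R` is via `θ`. -/
def IsReflexiveExtension {S : Type u} {R : Type v} [Ring S] [Ring R] (θ : S →+* R)
    [Module S R] : Prop :=
  IsReflexiveMod S R ∧
  ∃ Φ : (R →ₗ[S] S) → R, Function.Bijective Φ ∧
    (∀ f g : R →ₗ[S] S, Φ (f + g) = Φ f + Φ g) ∧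
    (∀ (a : R) (f g : R →ₗ[S] S), (∀ r, g r = f (r * a)) → Φ g = a * Φ f) ∧
    (∀ (s : S) (f g : R →ₗ[S] S), (∀ r, g r = f r * s) → Φ g = Φ f * θ s)

theorem reflexive_extension_exists_trace
    {S : Type u} {R : Type v} [Ring S] [Ring R] (θ : S →+* R)
    [Module S R] (hR : ∀ (s : S) (r : R), s • r = θ s * r)
    (hθ : IsReflexiveExtension θ) :
    ∃ π : R →ₗ[S] S, (∀ r s, π (r * θ s) = π r * s) ∧
      (∀ f : R →ₗ[S] S, ∃ a, ∀ r, f r = π (r * a)) ∧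
      (∀ a a', (∀ r, π (r * a) = π (r * a')) → a = a') ∧
      (∀ h : R → S, (∀ r r', h (r + r') = h r + h r') → (∀ r s, h (r * θ s) = h r * s) →
        ∃ b, ∀ r, h r = π (b * r)) ∧
      (∀ b b', (∀ r, π (b * r) = π (b' * r)) → b = b') := by
  obtain ⟨⟨hi, hs⟩, Φ, ⟨Φi, Φs⟩, hadd, hleft, hright⟩ := hθ
  obtain ⟨π, hπ⟩ := Φs 1
  let g : R → (R →ₗ[S] S) := fun a =>
    { toFun := fun r => π (r * a)
      map_add' := fun x y => by rw [add_mul, map_add]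
      map_smul' := fun s x => by
        have : (s • x) * a = s • (x * a) := by rw [hR, hR, mul_assoc]
        rw [this, map_smul]; rfl }
  have hg : ∀ a r, g a r = π (r * a) := fun _ _ => rfl
  have hΦg : ∀ a, Φ (g a) = a := fun a => by
    rw [hleft a π (g a) (fun r => rfl), hπ, mul_one]
  have hgΦ : ∀ f, g (Φ f) = f := fun f => Φi (hΦg _)
  refine ⟨π, ?_, ?_, ?_, ?_, ?_⟩
  · intro r s
    have h1 : Φ (MulOpposite.op s • π) = θ s := by
      rw [hright s π _ (fun r => rfl), hπ, one_mul]
    have h2 := hgΦ (MulOpposite.op s • π)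
    rw [h1] at h2
    exact DFunLike.congr_fun h2 r
  · intro f
    exact ⟨Φ f, fun r => by rw [← hg, hgΦ]⟩
  · intro a a' h
    rw [← hΦg a, ← hΦg a']
    exact congrArg Φ (LinearMap.ext h)
  · intro h h1 h2
    obtain ⟨b, hb⟩ := hs
      { toFun := fun f => h (Φ f)
        map_add' := fun f f' => by rw [hadd, h1]
        map_smul' := fun s f => by
          rw [hright s.unop f (s • f) (fun r => rfl), h2]; rfl }
    refine ⟨b, fun r => ?_⟩
    have := DFunLike.congr_fun hb (g r)
    change g r b = h (Φ (g r)) at this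
    rw [hΦg] at this
    exact this.symm
  · intro b b' h
    apply hi
    ext f
    change f b = f b'
    rw [← hgΦ f]
    exact h _

theorem reflexive_extension_preserves_reflexivity
    {S : Type u} {R : Type v} [Ring S] [Ring R] (θ : S →+* R)
    [Module S R] (hR : ∀ (s : S) (r : R), s • r = θ s * r)
    (hθ : IsReflexiveExtension θ)
    (X : Type w) [AddCommGroup X] [Module R X]
    [Module S X] (hX : ∀ (s : S) (x : X), s • x = θ s • x) :
    IsReflexiveMod R X ↔ IsReflexiveMod S X := by
  obtain ⟨π, hπs, hA, hA', hB, hB'⟩ := reflexive_extension_exists_trace θ hR hθ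
  let D : (X →ₗ[R] R) → (X →ₗ[S] S) := fun φ =>
    { toFun := fun x => π (φ x)
      map_add' := fun x y => by rw [map_add, map_add]
      map_smul' := fun s x => by
        rw [hX, map_smul, smul_eq_mul, ← hR, map_smul]; rfl }
  have hD : ∀ φ x, D φ x = π (φ x) := fun _ _ => rfl
  have Dinj : Function.Injective D := by
    intro φ φ' h
    ext x
    apply hA'
    intro r
    have := DFunLike.congr_fun h (r • x)
    rw [hD, hD, map_smul φ, map_smul φ'] at this
    exact this
  have Dsurj : Function.Surjective D := by
    intro f
    have key : ∀ x, ∃ a, ∀ r : R, f (r • x) = π (r * a) := fun x =>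
      hA { toFun := fun r => f (r • x)
           map_add' := fun r r' => by rw [add_smul, map_add]
           map_smul' := fun s r => by rw [hR, mul_smul, ← hX, map_smul]; rfl }
    choose φ hφ using key
    refine ⟨{ toFun := φ, map_add' := ?_, map_smul' := ?_ }, ?_⟩
    · intro x y
      apply hA'
      intro r
      rw [← hφ, mul_add, map_add, ← hφ, ← hφ, smul_add, map_add]
    · intro a x
      apply hA'
      intro r
      rw [← hφ, RingHom.id_apply, smul_eq_mul, ← mul_assoc, ← hφ, mul_smul]
    · ext x
      change π (φ x) = f x
      have := hφ x 1
      rw [one_smul, one_mul] at this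
      exact this.symm
  have Dadd : ∀ φ φ', D (φ + φ') = D φ + D φ' := by
    intro φ φ'
    ext x
    exact map_add π _ _
  have Dsmul : ∀ φ s, D (MulOpposite.op (θ s) • φ) = MulOpposite.op s • D φ := by
    intro φ s
    ext x
    exact hπs _ _
  choose ψ hψ using Dsurj
  have hψD : ∀ φ, ψ (D φ) = φ := fun φ => Dinj (hψ _)
  let T : ((X →ₗ[R] R) →ₗ[Rᵐᵒᵖ] R) → ((X →ₗ[S] S) →ₗ[Sᵐᵒᵖ] S) := fun G =>
    { toFun := fun f => π (G (ψ f))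
      map_add' := fun f f' => by
        have : ψ (f + f') = ψ f + ψ f' := Dinj (by rw [Dadd, hψ, hψ, hψ])
        rw [this, map_add, map_add]
      map_smul' := fun s f => by
        have : ψ (s • f) = MulOpposite.op (θ s.unop) • ψ f := Dinj (by
          rw [Dsmul, hψ, hψ]; rfl)
        rw [this, map_smul]
        exact hπs _ _ }
  have hT : ∀ G φ, T G (D φ) = π (G φ) := fun G φ => by
    change π (G (ψ (D φ))) = _
    rw [hψD]
  have Gsmul : ∀ (G : (X →ₗ[R] R) →ₗ[Rᵐᵒᵖ] R) φ r, G (MulOpposite.op r • φ) = G φ * r :=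
    fun G φ r => map_smul G _ _
  have Tbij : Function.Bijective T := by
    constructor
    · intro G G' h
      ext φ
      apply hB'
      intro r
      have := DFunLike.congr_fun h (D (MulOpposite.op r • φ))
      rw [hT, hT, Gsmul, Gsmul] at this
      exact this
    · intro F
      have key : ∀ φ : X →ₗ[R] R, ∃ b, ∀ r, F (D (MulOpposite.op r • φ)) = π (b * r) := by
        intro φ
        refine hB (fun r => F (D (MulOpposite.op r • φ))) ?_ ?_
        · intro r r'
          rw [MulOpposite.op_add, add_smul, Dadd, map_add]
        · intro r s
          rw [MulOpposite.op_mul, mul_smul, Dsmul, map_smul]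
          rfl
      choose G hG using key
      refine ⟨{ toFun := G, map_add' := ?_, map_smul' := ?_ }, ?_⟩
      · intro φ φ'
        apply hB'
        intro r
        rw [← hG, add_mul, map_add, ← hG, ← hG, smul_add, Dadd, map_add]
      · intro a φ
        apply hB'
        intro r
        have : (RingHom.id Rᵐᵒᵖ a • G φ) * r = G φ * (a.unop * r) := mul_assoc _ _ _
        rw [this, ← hG, ← hG, MulOpposite.op_mul, mul_smul, MulOpposite.op_unop]
      · ext f
        change π (G (ψ f)) = F f
        have := hG (ψ f) 1
        rw [MulOpposite.op_one, one_smul, mul_one, hψ] at this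
        exact this.symm
  have hcomp : evalFun S X = T ∘ evalFun R X := by
    funext x
    ext f
    change f x = π (ψ f x)
    rw [← hD, hψ]
  unfold IsReflexiveMod
  rw [hcomp]
  exact (Function.Bijective.of_comp_iff' Tbij _).symm
end

section
/- Let θ : S → R be a reflexive extension. Then a left R-module X is torsionless as an R-module if and only if the underlying left S-module X (via restriction of scalars along θ) is torsionless as an S-module. -/
/- STATEMENT 4: For a reflexive extension θ : S → R, a left R-module X is torsionless
over R iff the underlying S-module X (restriction of scalars along θ) is torsionless. -/

universe u v w

theorem reflexive_extension_preserves_torsionless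
    {S : Type u} {R : Type v} [Ring S] [Ring R] (θ : S →+* R)
    [Module S R] (hR : ∀ (s : S) (r : R), s • r = θ s * r)
    (hθ : IsReflexiveExtension θ)
    (X : Type w) [AddCommGroup X] [Module R X]
    [Module S X] (hX : ∀ (s : S) (x : X), s • x = θ s • x) :
    IsTorsionlessMod R X ↔ IsTorsionlessMod S X := by
  obtain ⟨hrefl, Φ, hΦ, hadd, hmul, -⟩ := hθ
  constructor
  · intro h x y hxy
    apply h
    refine LinearMap.ext fun f => ?_
    change f x = f y
    apply hrefl.1
    refine LinearMap.ext fun g => ?_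
    change g (f x) = g (f y)
    let k : X →ₗ[S] S :=
      { toFun := fun z => g (f z)
        map_add' := fun a b => by rw [map_add, map_add]
        map_smul' := fun s a => by
          rw [hX, map_smul, smul_eq_mul, ← hR, map_smul]; rfl }
    exact LinearMap.congr_fun hxy k
  · intro h x y hxy
    apply h
    refine LinearMap.ext fun f => ?_
    change f x = f y
    let F : X → (R →ₗ[S] S) := fun z =>
      { toFun := fun r => f (r • z)
        map_add' := fun a b => by rw [add_smul, map_add]
        map_smul' := fun s a => by
          rw [hR, mul_smul, ← hX, map_smul]; rfl }
    let k : X →ₗ[R] R :=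
      { toFun := fun z => Φ (F z)
        map_add' := fun a b => by
          rw [← hadd]
          congr 1
          refine LinearMap.ext fun r => ?_
          change f (r • (a + b)) = f (r • a) + f (r • b)
          rw [smul_add, map_add]
        map_smul' := fun a z => by
          refine hmul a (F z) (F (a • z)) fun r => ?_
          change f (r • a • z) = f ((r * a) • z)
          rw [mul_smul] }
    have h1 : Φ (F x) = Φ (F y) := LinearMap.congr_fun hxy k
    have h2 : f ((1 : R) • x) = f ((1 : R) • y) := LinearMap.congr_fun (hΦ.1 h1) 1
    rwa [one_smul, one_smul] at h2
end

section
/- Let S be a commutative ring and R an S-algebra such that the S-module R is reflexive (i.e. the evaluation map ev_R : R → Hom_S(Hom_S(R,S), S) is bijective). Let W' = Hom_S(R,S) be the left R-module with action (a·f)(x) = f(xa). Then the ring homomorphism ψ : Rᵒᵖ → End_R(W'), defined by (ψ(r)(f))(x) = f(rx), is bijective. -/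
/- STATEMENT 5: Let S be a commutative ring and R an S-algebra such that the S-module R
is reflexive. Let W' = Hom_S(R,S) with left R-action (a·f)(x) = f(xa). Then the ring
homomorphism ψ : Rᵒᵖ → End_R(W'), (ψ(r)(f))(x) = f(rx), is bijective. -/

universe u v

/-- The evaluation map `R → Hom_S(Hom_S(R,S), S)` over a commutative ring `S`. -/
def evalFunComm (S : Type u) [CommRing S] (X : Type v) [AddCommGroup X] [Module S X] :
    X → ((X →ₗ[S] S) →ₗ[S] S) := fun x =>
  { toFun := fun f => f x
    map_add' := fun _ _ => rfl
    map_smul' := fun _ _ => rfl }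

/-- The left `R`-action on `W' = Hom_S(R,S)`: `(a · f) x = f (x * a)`. -/
noncomputable def lAct {S : Type u} [CommRing S] {R : Type v} [Ring R] [Algebra S R]
    (a : R) (f : R →ₗ[S] S) : R →ₗ[S] S :=
  f.comp (LinearMap.mulRight S a)

/-- The map `ψ : Rᵒᵖ → End(W')` underlying the statement: `(ψ r f) x = f (r * x)`. -/
noncomputable def psi {S : Type u} [CommRing S] {R : Type v} [Ring R] [Algebra S R]
    (r : R) (f : R →ₗ[S] S) : R →ₗ[S] S :=
  f.comp (LinearMap.mulLeft S r)

theorem psi_bijective (S : Type u) [CommRing S] (R : Type v) [Ring R] [Algebra S R]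
    (hrefl : Function.Bijective (evalFunComm S R)) :
    -- ψ is injective (as a map from Rᵒᵖ, equivalently from R), and
    Function.Injective (fun r : R => psi (S := S) r) ∧
    -- ψ is surjective onto End_R(W'), the left R-linear endomorphisms of W':
    ∀ T : (R →ₗ[S] S) → (R →ₗ[S] S),
      ((∀ f g : R →ₗ[S] S, T (f + g) = T f + T g) ∧
       (∀ (a : R) (f : R →ₗ[S] S), T (lAct a f) = lAct a (T f))) →
      ∃ r : R, T = psi (S := S) r := by
  refine ⟨fun r r' h => hrefl.1 ?_, ?_⟩
  · ext f
    have h1 := LinearMap.congr_fun (congrFun h f) 1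
    simpa [psi, evalFunComm] using h1
  · rintro T ⟨hadd, hact⟩
    have hs : ∀ (s : S) (f : R →ₗ[S] S), s • f = lAct (algebraMap S R s) f := by
      intro s f
      ext x
      simp only [lAct, LinearMap.smul_apply, LinearMap.comp_apply, LinearMap.mulRight_apply]
      rw [← Algebra.commutes, ← Algebra.smul_def, map_smul]
    let φ : (R →ₗ[S] S) →ₗ[S] S :=
      { toFun := fun f => T f 1
        map_add' := fun f g => by rw [hadd]; rfl
        map_smul' := fun s f => by rw [hs, hact, ← hs]; rfl }
    obtain ⟨r, hr⟩ := hrefl.2 φ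
    have hr' : ∀ f : R →ₗ[S] S, f r = T f 1 := fun f => LinearMap.congr_fun hr f
    refine ⟨r, ?_⟩
    funext f
    ext x
    have h2 := hr' (lAct x f)
    rw [hact] at h2
    simpa [lAct, psi] using h2.symm
end

section
/- Let S be a ring and X a left S-module. Then X is totally reflexive if and only if the following four conditions hold: (1) both the left S-module X and the right S-module Hom_S(X,S) have finitely generated projective resolutions; (2) X is reflexive, i.e. the evaluation map ev_X : X → Hom_{Sᵒᵖ}(Hom_S(X,S), S) is bijective; (3) Ext^n_S(X,S) = 0 for all n ≥ 1; (4) Ext^n_{Sᵒᵖ}(Hom_S(X,S), S) = 0 for all n ≥ 1. -/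
/- STATEMENT 6: A left S-module X is totally reflexive iff (1) both X and its dual
Hom_S(X,S) have finitely generated projective resolutions, (2) X is reflexive,
(3) Ext^n_S(X,S) = 0 for n ≥ 1, and (4) Ext^n_{Sᵒᵖ}(Hom_S(X,S), S) = 0 for n ≥ 1. -/

open CategoryTheory

universe u v

/-- The dual of a linear map: precomposition `Hom_S(N,S) → Hom_S(M,S)`, a map of
right `S`-modules. -/
def dualComp (S : Type u) [Ring S] {M N : Type v} [AddCommGroup M] [AddCommGroup N]
    [Module S M] [Module S N] (f : M →ₗ[S] N) :
    (N →ₗ[S] S) →ₗ[Sᵐᵒᵖ] (M →ₗ[S] S) where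
  toFun g := g.comp f
  map_add' _ _ := by ext x; rfl
  map_smul' _ _ := by ext x; rfl

/-- A left `S`-module `X` is totally reflexive if there is an unbounded acyclic complex
`P•` of finitely generated projective `S`-modules whose dual complex `Hom_S(P•,S)` of
right `S`-modules is also acyclic, such that `X` is isomorphic to the first cocycle
`Z¹(P•) = ker (P¹ → P²)`. -/
def IsTotallyReflexive (S : Type u) [Ring S] (X : Type v) [AddCommGroup X]
    [Module S X] : Prop :=
  ∃ (P : ℤ → ModuleCat.{v} S) (d : ∀ n : ℤ, P n →ₗ[S] P (n + 1)),
    (∀ n, Module.Finite S (P n)) ∧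
    (∀ n, Module.Projective S (P n)) ∧
    (∀ n, LinearMap.range (d n) = LinearMap.ker (d (n + 1))) ∧
    (∀ n, LinearMap.range (dualComp S (d (n + 1))) = LinearMap.ker (dualComp S (d n))) ∧
    Nonempty (X ≃ₗ[S] LinearMap.ker (d 1))

/-- A left `S`-module `X` has a finitely generated projective resolution:
an exact sequence `⋯ → P¹ → P⁰ → X → 0` with each `Pⁱ` finitely generated projective. -/
def HasFGProjRes (S : Type u) [Ring S] (X : Type v) [AddCommGroup X] [Module S X] : Prop :=
  ∃ (P : ℕ → ModuleCat.{v} S) (d : ∀ n : ℕ, P (n + 1) →ₗ[S] P n) (ε : P 0 →ₗ[S] X),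
    (∀ n, Module.Finite S (P n)) ∧
    (∀ n, Module.Projective S (P n)) ∧
    Function.Surjective ε ∧
    LinearMap.range (d 0) = LinearMap.ker ε ∧
    ∀ n, LinearMap.range (d (n + 1)) = LinearMap.ker (d n)

section
variable {R : Type u} [Ring R] (P : ℕ → ModuleCat.{u} R) (d : ∀ n : ℕ, P (n + 1) →ₗ[R] P n)

noncomputable def resCx (h : ∀ n, LinearMap.range (d (n + 1)) = LinearMap.ker (d n)) :
    ChainComplex (ModuleCat.{u} R) ℕ :=
  ChainComplex.of P (fun n => ModuleCat.ofHom (d n)) (by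
    intro n
    ext x
    have : d (n+1) x ∈ LinearMap.ker (d n) := by rw [← h]; exact ⟨x, rfl⟩
    simpa using this)

lemma resCx_d (h : ∀ n, LinearMap.range (d (n + 1)) = LinearMap.ker (d n)) (n : ℕ) :
    (resCx P d h).d (n+1) n = ModuleCat.ofHom (d n) := ChainComplex.of_d P (fun n => (ModuleCat.ofHom (d n) : P (n+1) ⟶ P n)) n

lemma resCx_exact (h : ∀ n, LinearMap.range (d (n + 1)) = LinearMap.ker (d n)) (n : ℕ) :
    (resCx P d h).ExactAt (n+1) := by
  rw [HomologicalComplex.exactAt_iff' _ (n + 1 + 1) (n + 1) n (by simp) (by simp)]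
  rw [ShortComplex.moduleCat_exact_iff_range_eq_ker]
  have := h n
  rw [← ModuleCat.hom_ofHom (d n), ← ModuleCat.hom_ofHom (d (n+1)), ← resCx_d P d h,
    ← resCx_d P d h] at this
  exact this

lemma resCx_comp {X : ModuleCat.{u} R} (ε : P 0 →ₗ[R] X)
    (h0 : LinearMap.range (d 0) = LinearMap.ker ε)
    (h : ∀ n, LinearMap.range (d (n + 1)) = LinearMap.ker (d n)) :
    (resCx P d h).d 1 0 ≫ (ModuleCat.ofHom ε : P 0 ⟶ X) = 0 := by
  rw [resCx_d]
  ext x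
  have : d 0 x ∈ LinearMap.ker ε := by rw [← h0]; exact ⟨x, rfl⟩
  exact this

noncomputable def resRes {X : ModuleCat.{u} R} (ε : P 0 →ₗ[R] X)
    (hp : ∀ n, Module.Projective R (P n))
    (hε : Function.Surjective ε) (h0 : LinearMap.range (d 0) = LinearMap.ker ε)
    (h : ∀ n, LinearMap.range (d (n + 1)) = LinearMap.ker (d n)) :
    ProjectiveResolution X where
  complex := resCx P d h
  projective n := (IsProjective.iff_projective (P n)).1 (hp n)
  π := (ChainComplex.toSingle₀Equiv _ _).symm ⟨(ModuleCat.ofHom ε : P 0 ⟶ X), resCx_comp P d ε h0 h⟩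
  quasiIso := ⟨fun n => by
    cases n
    · rw [ChainComplex.quasiIsoAt₀_iff, ShortComplex.quasiIso_iff_of_zeros']
      · refine (ShortComplex.exact_and_epi_g_iff_of_iso (S₂ := ShortComplex.mk (ModuleCat.ofHom (d 0)) (ModuleCat.ofHom ε : P 0 ⟶ X) (by
          ext x
          have : d 0 x ∈ LinearMap.ker ε := by rw [← h0]; exact ⟨x, rfl⟩
          exact this)) ?_).2 ⟨?_, ?_⟩
        · exact ShortComplex.isoMk (Iso.refl _) (Iso.refl _) (Iso.refl _)
            ((Category.id_comp _).trans ((resCx_d P d h 0).symm.trans (Category.comp_id _).symm))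
            ((Category.id_comp _).trans ((ChainComplex.toSingle₀Equiv_symm_apply_f_zero (C := resCx P d h) (X := X)
               (ModuleCat.ofHom ε : P 0 ⟶ X) (resCx_comp P d ε h0 h)).symm.trans
              (Category.comp_id _).symm))
        · rw [ShortComplex.moduleCat_exact_iff_range_eq_ker]; exact h0
        · rw [ModuleCat.epi_iff_surjective]; exact hε
      all_goals rfl
    · rw [quasiIsoAt_iff_exactAt']
      · apply resCx_exact
      · apply ChainComplex.exactAt_succ_single_obj⟩

lemma ext_iff {X : ModuleCat.{u} R} (Y : ModuleCat.{u} R) (ε : P 0 →ₗ[R] X)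
    (hp : ∀ n, Module.Projective R (P n))
    (hε : Function.Surjective ε) (h0 : LinearMap.range (d 0) = LinearMap.ker ε)
    (h : ∀ n, LinearMap.range (d (n + 1)) = LinearMap.ker (d n)) (n : ℕ) :
    Subsingleton (((Ext ℤ (ModuleCat.{u} R) (n+1)).obj (Opposite.op X)).obj Y) ↔
      ∀ f : P (n+1) →ₗ[R] Y, f.comp (d (n+1)) = 0 → ∃ g : P n →ₗ[R] Y, g.comp (d n) = f := by
  rw [← ModuleCat.isZero_iff_subsingleton, ((resRes P d ε hp hε h0 h).isoExt (R := ℤ) (n+1) Y).isZero_iff, ← HomologicalComplex.exactAt_iff_isZero_homology,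
    HomologicalComplex.exactAt_iff' _ n (n + 1) (n+2) (by simp) (by simp),
    ShortComplex.moduleCat_exact_iff]
  have key : ∀ m (f : P m ⟶ Y), (((resRes P d ε hp hε h0 h).complex.linearYonedaObj ℤ Y).d m (m+1)) f = 
     (ModuleCat.ofHom (d m) ≫ f : P (m+1) ⟶ Y) := by
    intro m f
    rw [← resCx_d P d h]
    rfl
  constructor
  · intro H f hf
    obtain ⟨g, hg⟩ := H (ModuleCat.ofHom f : P (n+1) ⟶ Y) (by
      refine (key _ _).trans ?_
      exact congrArg ModuleCat.ofHom hf)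
    refine ⟨ModuleCat.Hom.hom (show P n ⟶ Y from g), ?_⟩
    have := (key _ _).symm.trans hg
    exact congrArg ModuleCat.Hom.hom this
  · intro H f hf
    obtain ⟨g, hg⟩ := H (ModuleCat.Hom.hom (show P (n+1) ⟶ Y from f)) (by
      have := (key _ _).symm.trans hf
      exact congrArg ModuleCat.Hom.hom this)
    refine ⟨(ModuleCat.ofHom g : P n ⟶ Y), ?_⟩
    refine (key _ _).trans ?_
    exact congrArg ModuleCat.ofHom hg
end

section bidual
variable {A B D M : Type*} [Ring A] [Ring B] [AddCommGroup D] [Module A D] [Module B D]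
  [SMulCommClass A B D] [SMulCommClass B A D] [AddCommGroup M] [Module A M]

/-- Generic evaluation into the bidual. -/
def gev (A B D : Type*) {M : Type*} [Ring A] [Ring B] [AddCommGroup D] [Module A D] [Module B D]
    [SMulCommClass A B D] [SMulCommClass B A D] [AddCommGroup M] [Module A M] :
    M →ₗ[A] ((M →ₗ[A] D) →ₗ[B] D) where
  toFun x :=
    { toFun := fun f => f x
      map_add' := fun _ _ => rfl
      map_smul' := fun _ _ => rfl }
  map_add' x y := by ext f; simp
  map_smul' a x := by ext f; simp

@[simp] lemma gev_apply (x : M) (f : M →ₗ[A] D) : gev A B D x f = f x := rfl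

lemma gdual_basis [Module.Finite A M] [Module.Projective A M] :
    ∃ (n : ℕ) (c : Fin n → (M →ₗ[A] A)) (e : Fin n → M), ∀ x, x = ∑ k, c k x • e k := by
  obtain ⟨n, s, i, _, _, h⟩ := Module.Finite.exists_comp_eq_id_of_projective A M
  refine ⟨n, fun k => (LinearMap.proj k).comp i, fun k => s (Pi.single k 1), fun x => ?_⟩
  conv_lhs => rw [← LinearMap.id_apply (R := A) x, ← h]
  simp only [LinearMap.comp_apply, LinearMap.proj_apply]
  conv_lhs => rw [pi_eq_sum_univ' (i x)]
  simp only [map_sum, map_smul]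

lemma gdual_expand (eA : A ≃ₗ[A] D) (eB : B ≃ₗ[B] D) (h1 : eA 1 = eB 1)
    {n : ℕ} {c : Fin n → (M →ₗ[A] A)} {e : Fin n → M}
    (h : ∀ x, x = ∑ k, c k x • e k) (f : M →ₗ[A] D) :
    f = ∑ k, eB.symm (f (e k)) • (eA.toLinearMap.comp (c k)) := by
  ext x
  conv_lhs => rw [h x]
  simp only [map_sum, map_smul, LinearMap.sum_apply, LinearMap.smul_apply, LinearMap.comp_apply]
  refine Finset.sum_congr rfl fun k _ => ?_
  have h2 : ∀ a : A, eA a = a • eA 1 := fun a => by rw [← map_smul]; simp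
  have h3 : ∀ b : B, eB b = b • eB 1 := fun a => by rw [← map_smul]; simp
  rw [LinearEquiv.coe_coe, h2 (c k x), smul_comm, h1, ← h3]
  simp

lemma gev_bijective (eA : A ≃ₗ[A] D) (eB : B ≃ₗ[B] D) (h1 : eA 1 = eB 1)
    [Module.Finite A M] [Module.Projective A M] :
    Function.Bijective (gev A B D : M →ₗ[A] _) := by
  obtain ⟨n, c, e, h⟩ := gdual_basis (A := A) (M := M)
  constructor
  · rw [← LinearMap.ker_eq_bot, LinearMap.ker_eq_bot']
    intro x hx
    rw [h x]
    refine Finset.sum_eq_zero fun k _ => ?_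
    have := DFunLike.congr_fun hx (eA.toLinearMap.comp (c k))
    simp at this
    simp [this]
  · intro θ
    refine ⟨∑ k, eA.symm (θ (eA.toLinearMap.comp (c k))) • e k, ?_⟩
    ext f
    have h2 : ∀ a : A, eA a = a • eA 1 := fun a => by rw [← map_smul]; simp
    have h3 : ∀ b : B, eB b = b • eB 1 := fun a => by rw [← map_smul]; simp
    conv_rhs => rw [gdual_expand eA eB h1 h f]
    rw [gev_apply]
    simp only [map_sum, map_smul]
    refine Finset.sum_congr rfl fun k _ => ?_
    conv_rhs => rw [← eA.apply_symm_apply (θ (eA.toLinearMap.comp (c k))), h2, smul_comm, h1, ← h3]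
    simp

lemma gdual_fg (eA : A ≃ₗ[A] D) (eB : B ≃ₗ[B] D) (h1 : eA 1 = eB 1)
    [Module.Finite A M] [Module.Projective A M] :
    Module.Finite B (M →ₗ[A] D) ∧ Module.Projective B (M →ₗ[A] D) := by
  obtain ⟨n, c, e, h⟩ := gdual_basis (A := A) (M := M)
  let i : (M →ₗ[A] D) →ₗ[B] (Fin n → B) :=
    { toFun := fun f k => eB.symm (f (e k))
      map_add' := fun f g => by ext k; simp
      map_smul' := fun b f => by ext k; simp }
  let s : (Fin n → B) →ₗ[B] (M →ₗ[A] D) :=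
    { toFun := fun b => ∑ k, b k • (eA.toLinearMap.comp (c k))
      map_add' := fun f g => by simp [add_smul, Finset.sum_add_distrib]
      map_smul' := fun b f => by simp [Finset.smul_sum, smul_smul] }
  have hs : s.comp i = LinearMap.id := by
    ext1 f
    exact (gdual_expand eA eB h1 h f).symm
  exact ⟨Module.Finite.of_surjective s fun f => ⟨i f, DFunLike.congr_fun hs f⟩,
    Module.Projective.of_split i s hs⟩

end bidual

section spec
variable (S : Type u) [Ring S]

def opE : Sᵐᵒᵖ ≃ₗ[Sᵐᵒᵖ] S where
  toFun b := b.unop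
  invFun := MulOpposite.op
  map_add' _ _ := rfl
  map_smul' _ _ := rfl
  left_inv _ := rfl
  right_inv _ := rfl

variable (M : Type v) [AddCommGroup M] [Module S M] 

lemma lbij [Module.Finite S M] [Module.Projective S M] :
    Function.Bijective (gev S Sᵐᵒᵖ S : M →ₗ[S] _) :=
  gev_bijective (LinearEquiv.refl S S) (opE S) rfl

lemma lfg [Module.Finite S M] [Module.Projective S M] :
    Module.Finite Sᵐᵒᵖ (M →ₗ[S] S) ∧ Module.Projective Sᵐᵒᵖ (M →ₗ[S] S) :=
  gdual_fg (LinearEquiv.refl S S) (opE S) rfl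

variable (N : Type v) [AddCommGroup N] [Module Sᵐᵒᵖ N] 

lemma rbij [Module.Finite Sᵐᵒᵖ N] [Module.Projective Sᵐᵒᵖ N] :
    Function.Bijective (gev Sᵐᵒᵖ S S : N →ₗ[Sᵐᵒᵖ] _) :=
  gev_bijective (opE S) (LinearEquiv.refl S S) rfl

lemma rfg [Module.Finite Sᵐᵒᵖ N] [Module.Projective Sᵐᵒᵖ N] :
    Module.Finite S (N →ₗ[Sᵐᵒᵖ] S) ∧ Module.Projective S (N →ₗ[Sᵐᵒᵖ] S) :=
  gdual_fg (opE S) (LinearEquiv.refl S S) rfl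

end spec

section halves
variable {S : Type u} [Ring S]

lemma range_eq_ker_iff {R M N L : Type*} [Ring R] [AddCommGroup M] [AddCommGroup N]
    [AddCommGroup L] [Module R M] [Module R N] [Module R L] (f : M →ₗ[R] N) (g : N →ₗ[R] L) :
    LinearMap.range f = LinearMap.ker g ↔
      (∀ x, g (f x) = 0) ∧ ∀ y, g y = 0 → ∃ x, f x = y := by
  constructor
  · intro h
    exact ⟨fun x => by rw [← LinearMap.mem_ker, ← h]; exact ⟨x, rfl⟩,
      fun y hy => by rw [← LinearMap.mem_ker, ← h] at hy; exact hy⟩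
  · rintro ⟨h, h'⟩
    ext y
    exact ⟨by rintro ⟨x, rfl⟩; exact h x, fun hy => h' y hy⟩

lemma dual_exact_iff {M N L : Type v} [AddCommGroup M] [AddCommGroup N]
    [AddCommGroup L] [Module S M] [Module S N] [Module S L] (f : M →ₗ[S] N) (g : N →ₗ[S] L)
    (h : ∀ x, g (f x) = 0) :
    LinearMap.range (dualComp S g) = LinearMap.ker (dualComp S f) ↔
      ∀ y : N →ₗ[S] S, y.comp f = 0 → ∃ x : L →ₗ[S] S, x.comp g = y := by
  rw [range_eq_ker_iff]
  constructor
  · exact fun H => H.2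
  · refine fun H => ⟨fun y => ?_, H⟩
    ext x
    change y (g (f x)) = 0
    rw [h, map_zero]

/-- Glue the two halves. -/
def glP (A B : ℕ → ModuleCat.{v} S) : ℤ → ModuleCat.{v} S
  | Int.ofNat 0 => A 0
  | Int.ofNat (n+1) => B n
  | Int.negSucc n => A (n+1)

def glD (A B : ℕ → ModuleCat.{v} S) (δ : ∀ n, A (n+1) →ₗ[S] A n) (m : A 0 →ₗ[S] B 0)
    (e : ∀ n, B n →ₗ[S] B (n+1)) : ∀ n : ℤ, glP A B n →ₗ[S] glP A B (n+1)
  | Int.ofNat 0 => m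
  | Int.ofNat (n+1) => e n
  | Int.negSucc 0 => δ 0
  | Int.negSucc (n+1) => δ (n+1)

lemma glue_tr (X : Type v) [AddCommGroup X] [Module S X]
    (A B : ℕ → ModuleCat.{v} S) (δ : ∀ n, A (n+1) →ₗ[S] A n) (m : A 0 →ₗ[S] B 0)
    (e : ∀ n, B n →ₗ[S] B (n+1))
    (hA : ∀ n, Module.Finite S (A n) ∧ Module.Projective S (A n))
    (hB : ∀ n, Module.Finite S (B n) ∧ Module.Projective S (B n))
    (xA : ∀ n, LinearMap.range (δ (n+1)) = LinearMap.ker (δ n))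
    (xm : LinearMap.range (δ 0) = LinearMap.ker m)
    (xm' : LinearMap.range m = LinearMap.ker (e 0))
    (xB : ∀ n, LinearMap.range (e n) = LinearMap.ker (e (n+1)))
    (yA : ∀ n, LinearMap.range (dualComp S (δ n)) = LinearMap.ker (dualComp S (δ (n+1))))
    (ym : LinearMap.range (dualComp S m) = LinearMap.ker (dualComp S (δ 0)))
    (ym' : LinearMap.range (dualComp S (e 0)) = LinearMap.ker (dualComp S m))
    (yB : ∀ n, LinearMap.range (dualComp S (e (n+1))) = LinearMap.ker (dualComp S (e n)))
    (hX : Nonempty (X ≃ₗ[S] LinearMap.ker (e 0))) : IsTotallyReflexive S X := by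
  refine ⟨glP A B, glD A B δ m e, ?_, ?_, ?_, ?_, hX⟩
  · rintro ((_ | n) | n)
    exacts [(hA 0).1, (hB n).1, (hA (n+1)).1]
  · rintro ((_ | n) | n)
    exacts [(hA 0).2, (hB n).2, (hA (n+1)).2]
  · rintro ((_ | n) | (_ | _ | n))
    exacts [xm', xB n, xm, xA 0, xA (n+1)]
  · rintro ((_ | n) | (_ | _ | n))
    exacts [ym', yB n, ym, yA 0, yA (n+1)]

lemma unglue_tr {X : Type v} [AddCommGroup X] [Module S X] (H : IsTotallyReflexive S X) :
    ∃ (A B : ℕ → ModuleCat.{v} S) (δ : ∀ n, A (n+1) →ₗ[S] A n) (m : A 0 →ₗ[S] B 0)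
    (e : ∀ n, B n →ₗ[S] B (n+1)),
    (∀ n, Module.Finite S (A n) ∧ Module.Projective S (A n)) ∧
    (∀ n, Module.Finite S (B n) ∧ Module.Projective S (B n)) ∧
    (∀ n, LinearMap.range (δ (n+1)) = LinearMap.ker (δ n)) ∧
    (LinearMap.range (δ 0) = LinearMap.ker m) ∧
    (LinearMap.range m = LinearMap.ker (e 0)) ∧
    (∀ n, LinearMap.range (e n) = LinearMap.ker (e (n+1))) ∧
    (∀ n, LinearMap.range (dualComp S (δ n)) = LinearMap.ker (dualComp S (δ (n+1)))) ∧
    (LinearMap.range (dualComp S m) = LinearMap.ker (dualComp S (δ 0))) ∧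
    (LinearMap.range (dualComp S (e 0)) = LinearMap.ker (dualComp S m)) ∧
    (∀ n, LinearMap.range (dualComp S (e (n+1))) = LinearMap.ker (dualComp S (e n))) ∧
    (Nonempty (X ≃ₗ[S] LinearMap.ker (e 0))) := by
  obtain ⟨P, d, hf, hp, hx, hy, hX⟩ := H
  refine ⟨fun n => Nat.casesOn n (P (Int.ofNat 0)) fun k => P (Int.negSucc k),
    fun n => P (Int.ofNat (n+1)),
    fun n => Nat.casesOn n (d (Int.negSucc 0)) fun k => d (Int.negSucc (k+1)),
    d (Int.ofNat 0), fun n => d (Int.ofNat (n+1)),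
    ?_, fun n => ⟨hf _, hp _⟩, ?_, hx (Int.negSucc 0), hx (Int.ofNat 0), fun n => hx (Int.ofNat (n+1)),
    ?_, hy (Int.negSucc 0), hy (Int.ofNat 0), fun n => hy (Int.ofNat (n+1)), hX⟩
  · rintro (_ | n)
    exacts [⟨hf _, hp _⟩, ⟨hf _, hp _⟩]
  · rintro (_ | n)
    exacts [hx (Int.negSucc 1), hx (Int.negSucc (n+2))]
  · rintro (_ | n)
    exacts [hy (Int.negSucc 1), hy (Int.negSucc (n+2))]

end halves

section mainproof
variable {S : Type u} [Ring S] {X : Type u} [AddCommGroup X] [Module S X]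

lemma surj_factor {R M N L : Type*} [Ring R] [AddCommGroup M] [AddCommGroup N]
    [AddCommGroup L] [Module R M] [Module R N] [Module R L] (f : M →ₗ[R] N) (g : M →ₗ[R] L)
    (hf : Function.Surjective f) (h : ∀ x, f x = 0 → g x = 0) : ∃ k : N →ₗ[R] L, k.comp f = g := by
  refine ⟨(Submodule.liftQ _ g (fun x hx => h x hx)).comp
    (f.quotKerEquivOfSurjective hf).symm.toLinearMap, ?_⟩
  ext x
  have : (f.quotKerEquivOfSurjective hf).symm (f x) = Submodule.Quotient.mk x := by
    rw [LinearEquiv.symm_apply_eq]; rfl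
  simp only [LinearMap.comp_apply, LinearEquiv.coe_coe, this]
  rfl

/-- Precomposition on right duals. -/
def rdual {M N : Type v} [AddCommGroup M] [AddCommGroup N]
    [Module Sᵐᵒᵖ M] [Module Sᵐᵒᵖ N] (f : M →ₗ[Sᵐᵒᵖ] N) :
    (N →ₗ[Sᵐᵒᵖ] S) →ₗ[S] (M →ₗ[Sᵐᵒᵖ] S) where
  toFun g := g.comp f
  map_add' _ _ := by ext x; rfl
  map_smul' _ _ := by ext x; rfl

lemma forward_dir (H : IsTotallyReflexive S X) :
      ((HasFGProjRes S X ∧ HasFGProjRes Sᵐᵒᵖ (X →ₗ[S] S)) ∧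
       IsReflexiveMod S X ∧
       (∀ n : ℕ, 1 ≤ n → Subsingleton
         (((Ext ℤ (ModuleCat.{u} S) n).obj
            (Opposite.op (ModuleCat.of S X))).obj (ModuleCat.of S S))) ∧
       (∀ n : ℕ, 1 ≤ n → Subsingleton
         (((Ext ℤ (ModuleCat.{u} Sᵐᵒᵖ) n).obj
            (Opposite.op (ModuleCat.of Sᵐᵒᵖ (X →ₗ[S] S)))).obj (ModuleCat.of Sᵐᵒᵖ S)))) := by
  obtain ⟨A, B, δ, m, e, hA, hB, xA, xm, xm', xB, yA, ym, ym', yB, ⟨E⟩⟩ := unglue_tr H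
  have hAf := fun n => (hA n).1
  have hAp := fun n => (hA n).2
  have hBf := fun n => (hB n).1
  have hBp := fun n => (hB n).2
  obtain ⟨ι, hι, hιr⟩ : ∃ ι : X →ₗ[S] B 0, Function.Injective ι ∧
      LinearMap.range ι = LinearMap.ker (e 0) := by
    refine ⟨(Submodule.subtype _).comp E.toLinearMap, ?_, ?_⟩
    · exact Subtype.val_injective.comp E.injective
    · rw [LinearMap.range_comp_of_range_eq_top _ (LinearEquiv.range E)]
      exact Submodule.range_subtype _
  obtain ⟨π, hπ⟩ : ∃ π : A 0 →ₗ[S] X, ∀ a, ι (π a) = m a := by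
    have hm : ∀ a, m a ∈ LinearMap.range ι := fun a => by rw [hιr, ← xm']; exact ⟨a, rfl⟩
    refine ⟨(LinearEquiv.ofInjective ι hι).symm.toLinearMap.comp (m.codRestrict _ hm), fun a => ?_⟩
    exact congrArg Subtype.val ((LinearEquiv.ofInjective ι hι).apply_symm_apply ⟨m a, hm a⟩)
  have hπs : Function.Surjective π := by
    intro x
    have : ι x ∈ LinearMap.range m := by rw [xm', ← hιr]; exact ⟨x, rfl⟩
    obtain ⟨a, ha⟩ := this
    exact ⟨a, hι (by rw [hπ, ha])⟩
  have hπk : LinearMap.range (δ 0) = LinearMap.ker π := by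
    rw [xm]
    ext a
    rw [LinearMap.mem_ker, LinearMap.mem_ker, ← hπ, map_eq_zero_iff ι hι]
  have hηs : Function.Surjective (dualComp S ι) := by
    intro f
    have h1 : f.comp π ∈ LinearMap.range (dualComp S m) := by
      rw [ym]
      ext a
      have : δ 0 a ∈ LinearMap.ker π := by rw [← hπk]; exact ⟨a, rfl⟩
      change f (π (δ 0 a)) = 0
      rw [LinearMap.mem_ker.1 this, map_zero]
    obtain ⟨g, hg⟩ := h1
    refine ⟨g, ?_⟩
    ext x
    obtain ⟨a, rfl⟩ := hπs x
    have := DFunLike.congr_fun hg a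
    change g (ι (π a)) = f (π a)
    rw [hπ]
    exact this
  have hηk : LinearMap.range (dualComp S (e 0)) = LinearMap.ker (dualComp S ι) := by
    rw [ym']
    ext g
    rw [LinearMap.mem_ker, LinearMap.mem_ker]
    constructor
    · intro h
      ext x
      obtain ⟨a, rfl⟩ := hπs x
      have := DFunLike.congr_fun h a
      change g (ι (π a)) = 0
      rw [hπ]
      exact this
    · intro h
      ext a
      have := DFunLike.congr_fun h (π a)
      change g (m a) = 0
      rw [← hπ]
      exact this
  refine ⟨⟨⟨A, δ, π, hAf, hAp, hπs, hπk, xA⟩,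
    ⟨fun n => ModuleCat.of Sᵐᵒᵖ (B n →ₗ[S] S), fun n => dualComp S (e n), dualComp S ι,
      fun n => (lfg S (B n)).1, fun n => (lfg S (B n)).2, hηs, hηk, yB⟩⟩, ⟨?_, ?_⟩, ?_, ?_⟩
  · intro x y hxy
    apply hι
    apply (lbij S (B 0)).1
    ext g
    exact DFunLike.congr_fun hxy (g.comp ι)
  · intro θ
    obtain ⟨p, hp⟩ := (lbij S (B 0)).2 (θ.comp (dualComp S ι))
    have hp' : ∀ g : B 0 →ₗ[S] S, g p = θ (g.comp ι) := fun g => DFunLike.congr_fun hp g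
    have hpk : p ∈ LinearMap.range ι := by
      rw [hιr, LinearMap.mem_ker]
      apply (lbij S (B 1)).1
      ext g
      rw [map_zero]
      change (g.comp (e 0)) p = 0
      rw [hp']
      have : dualComp S (e 0) g ∈ LinearMap.ker (dualComp S ι) := by rw [← hηk]; exact ⟨g, rfl⟩
      have h2 : (g.comp (e 0)).comp ι = 0 := this
      rw [h2, map_zero]
    obtain ⟨x, rfl⟩ := hpk
    refine ⟨x, ?_⟩
    ext f
    obtain ⟨g, rfl⟩ := hηs f
    exact hp' g
  · rintro (_ | n) hn
    · omega
    refine (ext_iff A δ (X := ModuleCat.of S X) (ModuleCat.of S S) π hAp hπs hπk xA n).2 ?_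
    exact ((range_eq_ker_iff _ _).1 (yA n)).2
  · rintro (_ | n) hn
    · omega
    refine (ext_iff (fun n => ModuleCat.of Sᵐᵒᵖ (B n →ₗ[S] S)) (fun n => dualComp S (e n))
      (X := ModuleCat.of Sᵐᵒᵖ (X →ₗ[S] S)) (ModuleCat.of Sᵐᵒᵖ S) (dualComp S ι)
      (fun n => (lfg S (B n)).2) hηs hηk yB n).2 ?_
    intro θ hθ
    obtain ⟨p, hp⟩ := (lbij S (B (n+1))).2 θ
    have hp' : ∀ g : B (n+1) →ₗ[S] S, g p = θ g := fun g => DFunLike.congr_fun hp g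
    have hpk : p ∈ LinearMap.range (e n) := by
      rw [xB, LinearMap.mem_ker]
      apply (lbij S (B (n+1+1))).1
      ext g
      rw [map_zero]
      change (g.comp (e (n+1))) p = 0
      rw [hp']
      exact DFunLike.congr_fun hθ g
    obtain ⟨q, rfl⟩ := hpk
    refine ⟨gev S Sᵐᵒᵖ S q, ?_⟩
    ext g
    exact hp' g

lemma backward_dir (h1 : HasFGProjRes S X) (h1' : HasFGProjRes Sᵐᵒᵖ (X →ₗ[S] S))
    (h2 : IsReflexiveMod S X)
    (h3 : ∀ n : ℕ, 1 ≤ n → Subsingleton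
         (((Ext ℤ (ModuleCat.{u} S) n).obj
            (Opposite.op (ModuleCat.of S X))).obj (ModuleCat.of S S)))
    (h4 : ∀ n : ℕ, 1 ≤ n → Subsingleton
         (((Ext ℤ (ModuleCat.{u} Sᵐᵒᵖ) n).obj
            (Opposite.op (ModuleCat.of Sᵐᵒᵖ (X →ₗ[S] S)))).obj (ModuleCat.of Sᵐᵒᵖ S))) :
    IsTotallyReflexive S X := by
  obtain ⟨P, d, ε, hPf, hPp, hε, hεk, xP⟩ := h1
  obtain ⟨Q, t, η, hQf, hQp, hη, hηk, xQ⟩ := h1'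
  have k3 := fun n => (ext_iff P d (X := ModuleCat.of S X) (ModuleCat.of S S) ε hPp hε hεk xP n).1
    (h3 (n+1) (by omega))
  have k4 := fun n => (ext_iff Q t (X := ModuleCat.of Sᵐᵒᵖ (X →ₗ[S] S)) (ModuleCat.of Sᵐᵒᵖ S)
    η hQp hη hηk xQ n).1 (h4 (n+1) (by omega))
  have h2' : Function.Bijective (gev S Sᵐᵒᵖ S : X →ₗ[S] _) := h2
  have xP' := fun n => (range_eq_ker_iff _ _).1 (xP n)
  have xQ' := fun n => (range_eq_ker_iff _ _).1 (xQ n)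
  have hεk' := (range_eq_ker_iff _ _).1 hεk
  have hηk' := (range_eq_ker_iff _ _).1 hηk
  let j : X →ₗ[S] (Q 0 →ₗ[Sᵐᵒᵖ] S) := (rdual η).comp (gev S Sᵐᵒᵖ S)
  have hj : ∀ x q, j x q = η q x := fun _ _ => rfl
  have hji : Function.Injective j := by
    intro x y hxy
    apply h2'.1
    ext f
    obtain ⟨q, rfl⟩ := hη f
    exact DFunLike.congr_fun hxy q
  have hjx : LinearMap.range j = LinearMap.ker (rdual (S := S) (t 0)) := by
    rw [range_eq_ker_iff]
    refine ⟨fun x => ?_, fun ψ hψ => ?_⟩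
    · ext q
      change η (t 0 q) x = 0
      rw [hηk'.1]; rfl
    · obtain ⟨k, hk⟩ := surj_factor η ψ hη (fun q hq => by
        obtain ⟨q', rfl⟩ := hηk'.2 q hq
        exact DFunLike.congr_fun hψ q')
      obtain ⟨x, rfl⟩ := h2'.2 k
      exact ⟨x, hk⟩
  have xm : LinearMap.range (d 0) = LinearMap.ker (j.comp ε) := by
    rw [hεk, LinearMap.ker_comp_of_ker_eq_bot _ (LinearMap.ker_eq_bot.2 hji)]
  have xm' : LinearMap.range (j.comp ε) = LinearMap.ker (rdual (S := S) (t 0)) := by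
    rw [LinearMap.range_comp_of_range_eq_top _ (LinearMap.range_eq_top.2 hε), hjx]
  have xB : ∀ n, LinearMap.range (rdual (S := S) (t n)) = LinearMap.ker (rdual (S := S) (t (n+1))) := by
    intro n
    rw [range_eq_ker_iff]
    refine ⟨fun ψ => ?_, fun ψ hψ => k4 n ψ hψ⟩
    ext q
    change ψ (t n (t (n+1) q)) = 0
    rw [(xQ' n).1, map_zero]
  refine glue_tr X P (fun n => ModuleCat.of S (Q n →ₗ[Sᵐᵒᵖ] S)) d (j.comp ε)
    (fun n => rdual (t n)) (fun n => ⟨hPf n, hPp n⟩) (fun n => rfg S (Q n)) xP xm xm' xB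
    ?_ ?_ ?_ ?_ ?_
  · intro n
    rw [dual_exact_iff _ _ (xP' n).1]
    exact k3 n
  · rw [dual_exact_iff _ _ ((range_eq_ker_iff _ _).1 xm).1]
    intro f hf
    obtain ⟨k, hk⟩ := surj_factor ε f hε (fun p hp => by
      obtain ⟨p', rfl⟩ := hεk'.2 p hp
      exact DFunLike.congr_fun hf p')
    obtain ⟨q, rfl⟩ := hη k
    exact ⟨gev Sᵐᵒᵖ S S q, hk⟩
  · rw [dual_exact_iff _ _ ((range_eq_ker_iff _ _).1 xm').1]
    intro G hG
    obtain ⟨q, rfl⟩ := (rbij S (Q 0)).2 G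
    have : η q = 0 := by
      ext x
      obtain ⟨p, rfl⟩ := hε x
      exact DFunLike.congr_fun hG p
    obtain ⟨q', rfl⟩ := hηk'.2 q this
    exact ⟨gev Sᵐᵒᵖ S S q', rfl⟩
  · intro n
    rw [dual_exact_iff _ _ ((range_eq_ker_iff _ _).1 (xB n)).1]
    intro G hG
    obtain ⟨q, rfl⟩ := (rbij S (Q (n+1))).2 G
    have : t n q = 0 := by
      apply (rbij S (Q n)).1
      ext x
      rw [map_zero]
      exact DFunLike.congr_fun hG x
    obtain ⟨q', rfl⟩ := (xQ' n).2 q this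
    exact ⟨gev Sᵐᵒᵖ S S q', rfl⟩
  · exact ⟨(LinearEquiv.ofInjective j hji).trans (LinearEquiv.ofEq _ _ hjx)⟩

end mainproof

theorem totally_reflexive_iff (S : Type u) [Ring S]
    (X : Type u) [AddCommGroup X] [Module S X] :
    IsTotallyReflexive S X ↔
      ((HasFGProjRes S X ∧ HasFGProjRes Sᵐᵒᵖ (X →ₗ[S] S)) ∧
       IsReflexiveMod S X ∧
       (∀ n : ℕ, 1 ≤ n → Subsingleton
         (((Ext ℤ (ModuleCat.{u} S) n).obj
            (Opposite.op (ModuleCat.of S X))).obj (ModuleCat.of S S))) ∧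
       (∀ n : ℕ, 1 ≤ n → Subsingleton
         (((Ext ℤ (ModuleCat.{u} Sᵐᵒᵖ) n).obj
            (Opposite.op (ModuleCat.of Sᵐᵒᵖ (X →ₗ[S] S)))).obj (ModuleCat.of Sᵐᵒᵖ S)))) := by
  exact ⟨forward_dir, fun H => backward_dir H.1.1 H.1.2 H.2.1 H.2.2.1 H.2.2.2⟩
end

section
/- Let S be a ring. A left S-module X has a finitely generated projective resolution if and only if there is an exact sequence ⋯ → G⁻² → G⁻¹ → G⁰ → X → 0 of left S-modules such that each G⁻ⁱ has a finitely generated projective resolution. -/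
/- STATEMENT 8: A left S-module X has a finitely generated projective resolution iff
there is an exact sequence ⋯ → G⁻¹ → G⁰ → X → 0 where each G⁻ⁱ has a finitely
generated projective resolution. -/

universe u v

/-- Coinduction principle for finitely generated projective resolutions. -/
theorem HasFGProjRes.coind {S : Type u} [Ring S] (Q : ModuleCat.{v} S → Prop)
    (h : ∀ M : ModuleCat.{v} S, Q M → ∃ (P : ModuleCat.{v} S) (f : P →ₗ[S] M),
      Module.Finite S P ∧ Module.Projective S P ∧ Function.Surjective f ∧
      Q (ModuleCat.of S (LinearMap.ker f)))
    (X : ModuleCat.{v} S) (hX : Q X) : HasFGProjRes S X := by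
  choose P f hfin hproj hsurj hQ using h
  let st : ℕ → {M : ModuleCat.{v} S // Q M} := fun n =>
    Nat.rec ⟨X, hX⟩ (fun _ M => ⟨ModuleCat.of S (LinearMap.ker (f M.1 M.2)), hQ M.1 M.2⟩) n
  let e : ∀ n, P (st (n + 1)).1 (st (n + 1)).2 →ₗ[S] LinearMap.ker (f (st n).1 (st n).2) :=
    fun n => f (st (n + 1)).1 (st (n + 1)).2
  have he : ∀ n, Function.Surjective (e n) := fun n => hsurj (st (n + 1)).1 (st (n + 1)).2
  have hr : ∀ n, LinearMap.range ((LinearMap.ker (f (st n).1 (st n).2)).subtype ∘ₗ e n) =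
      LinearMap.ker (f (st n).1 (st n).2) := fun n => by
    rw [LinearMap.range_comp, LinearMap.range_eq_top.2 (he n), Submodule.map_top,
      Submodule.range_subtype]
  refine ⟨fun n => P (st n).1 (st n).2,
    fun n => (LinearMap.ker (f (st n).1 (st n).2)).subtype ∘ₗ e n,
    f X hX, fun n => hfin _ _, fun n => hproj _ _, hsurj _ _, hr 0, fun n => ?_⟩
  rw [hr (n + 1), LinearMap.ker_comp_of_ker_eq_bot _ (Submodule.ker_subtype _)]

theorem HasFGProjRes.unfold {S : Type u} [Ring S] {X : Type v} [AddCommGroup X] [Module S X]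
    (hX : HasFGProjRes S X) : ∃ (P : ModuleCat.{v} S) (f : P →ₗ[S] X),
      Module.Finite S P ∧ Module.Projective S P ∧ Function.Surjective f ∧
      HasFGProjRes S (LinearMap.ker f) := by
  obtain ⟨P, d, ε, hfin, hproj, hs, h0, hd⟩ := hX
  have hm : ∀ x, d 0 x ∈ LinearMap.ker ε := fun x => h0 ▸ LinearMap.mem_range_self _ x
  refine ⟨P 0, ε, hfin 0, hproj 0, hs, fun n => P (n + 1), fun n => d (n + 1),
    (d 0).codRestrict _ hm, fun n => hfin _, fun n => hproj _, ?_, ?_, fun n => hd _⟩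
  · rintro ⟨x, hx⟩
    rw [← h0] at hx
    obtain ⟨y, hy⟩ := hx
    exact ⟨y, Subtype.ext hy⟩
  · rw [LinearMap.ker_codRestrict]
    exact hd 0

/-- Finitely generated projective modules have a trivial resolution. -/
theorem HasFGProjRes.of_projective {S : Type u} [Ring S] (X : ModuleCat.{v} S)
    (h1 : Module.Finite S X) (h2 : Module.Projective S X) : HasFGProjRes S X := by
  refine HasFGProjRes.coind (fun M => Module.Finite S M ∧ Module.Projective S M) ?_ X ⟨h1, h2⟩
  rintro M ⟨hM1, hM2⟩
  refine ⟨M, LinearMap.id, hM1, hM2, Function.surjective_id, ?_⟩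
  have : Subsingleton (LinearMap.ker (LinearMap.id : M →ₗ[S] M)) := by
    rw [LinearMap.ker_id]; infer_instance
  exact ⟨inferInstanceAs (Module.Finite S (LinearMap.ker (LinearMap.id : M →ₗ[S] M))),
    inferInstanceAs (Module.Projective S (LinearMap.ker (LinearMap.id : M →ₗ[S] M)))⟩

/-- Horseshoe lemma. -/
theorem HasFGProjRes.extension {S : Type u} [Ring S] (A M C : ModuleCat.{v} S)
    (i : A →ₗ[S] M) (p : M →ₗ[S] C) (hi : Function.Injective i) (hp : Function.Surjective p)
    (hip : LinearMap.range i = LinearMap.ker p) (hA : HasFGProjRes S A)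
    (hC : HasFGProjRes S C) : HasFGProjRes S M := by
  refine HasFGProjRes.coind (fun M => ∃ (A C : ModuleCat.{v} S) (i : A →ₗ[S] M) (p : M →ₗ[S] C),
    Function.Injective i ∧ Function.Surjective p ∧ LinearMap.range i = LinearMap.ker p ∧
    HasFGProjRes S A ∧ HasFGProjRes S C) ?_ M ⟨A, C, i, p, hi, hp, hip, hA, hC⟩
  clear hC hA hip hp hi p i A C M
  rintro M ⟨A, C, i, p, hi, hp, hip, hA, hC⟩
  obtain ⟨P, f, hP1, hP2, hf, hPk⟩ := hA.unfold
  obtain ⟨R, g, hR1, hR2, hg, hRk⟩ := hC.unfold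
  obtain ⟨s, hs⟩ := Module.projective_lifting_property p g hp
  have hs' : ∀ x, p (s x) = g x := fun x => LinearMap.congr_fun hs x
  have hpi : ∀ x, p (i x) = 0 := fun x => by
    have : i x ∈ LinearMap.ker p := hip ▸ LinearMap.mem_range_self _ x
    exact this
  have hex : ∀ y, p y = 0 → ∃ x, i x = y := fun y hy => by
    have : y ∈ LinearMap.range i := hip ▸ (LinearMap.mem_ker.2 hy)
    exact this
  let F : (P × R) →ₗ[S] M := (i ∘ₗ f).coprod s
  have hF : ∀ a b, F (a, b) = i (f a) + s b := fun a b => by simp [F]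
  have hFs : Function.Surjective F := fun m => by
    obtain ⟨b, hb⟩ := hg (p m)
    obtain ⟨x, hx⟩ := hex (m - s b) (by rw [map_sub, hs', hb, sub_self])
    obtain ⟨a, rfl⟩ := hf x
    exact ⟨(a, b), by rw [hF, hx, sub_add_cancel]⟩
  let i' : LinearMap.ker f →ₗ[S] LinearMap.ker F :=
    (LinearMap.inl S P R ∘ₗ (LinearMap.ker f).subtype).codRestrict _ (fun x => by
      have := x.2
      rw [LinearMap.mem_ker] at this ⊢
      change F (x.1, 0) = 0
      rw [hF, this]; simp)
  let p' : LinearMap.ker F →ₗ[S] LinearMap.ker g :=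
    (LinearMap.snd S P R ∘ₗ (LinearMap.ker F).subtype).codRestrict _ (fun x => by
      obtain ⟨⟨a, b⟩, hx⟩ := x
      rw [LinearMap.mem_ker, hF] at hx
      rw [LinearMap.mem_ker]
      change g b = 0
      have := congrArg p hx
      rwa [map_add, hpi, zero_add, hs', map_zero] at this)
  refine ⟨ModuleCat.of S (P × R), F, inferInstanceAs (Module.Finite S (P × R)),
    inferInstanceAs (Module.Projective S (P × R)), hFs,
    ModuleCat.of S (LinearMap.ker f), ModuleCat.of S (LinearMap.ker g), i', p', ?_, ?_, ?_,
    hPk, hRk⟩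
  · intro x y hxy
    have : (x.1, (0 : R)) = (y.1, (0 : R)) := congrArg Subtype.val hxy
    exact Subtype.ext (Prod.ext_iff.1 this).1
  · rintro ⟨b, hb⟩
    rw [LinearMap.mem_ker] at hb
    obtain ⟨x, hx⟩ := hex (- s b) (by rw [map_neg, hs', hb, neg_zero])
    obtain ⟨a, rfl⟩ := hf x
    exact ⟨⟨(a, b), by rw [LinearMap.mem_ker, hF, hx, neg_add_cancel]⟩, rfl⟩
  · ext x
    constructor
    · rintro ⟨y, rfl⟩
      rfl
    · obtain ⟨⟨a, b⟩, hx⟩ := x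
      intro h
      have hb : b = 0 := congrArg Subtype.val h
      subst hb
      rw [LinearMap.mem_ker, hF, map_zero, add_zero] at hx
      exact ⟨⟨a, hi (by rw [hx, map_zero])⟩, rfl⟩

/-- Having a resolution by modules with finitely generated projective resolutions. -/
def HasFGPRRes (S : Type u) [Ring S] (X : ModuleCat.{v} S) : Prop :=
  ∃ (G : ℕ → ModuleCat.{v} S) (d : ∀ n : ℕ, G (n + 1) →ₗ[S] G n) (ε : G 0 →ₗ[S] X),
    Function.Surjective ε ∧
    LinearMap.range (d 0) = LinearMap.ker ε ∧
    (∀ n, LinearMap.range (d (n + 1)) = LinearMap.ker (d n)) ∧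
    ∀ n, HasFGProjRes S (G n)

/-- Prepend an object to a sequence. -/
def consObj {S : Type u} [Ring S] (W : ModuleCat.{v} S) (G : ℕ → ModuleCat.{v} S) :
    ℕ → ModuleCat.{v} S
  | 0 => W
  | n + 1 => G n

/-- Prepend a map to a sequence of maps. -/
def consMap {S : Type u} [Ring S] (W : ModuleCat.{v} S) (G : ℕ → ModuleCat.{v} S)
    (d : ∀ n : ℕ, G (n + 1) →ₗ[S] G n) (δ : G 0 →ₗ[S] W) :
    ∀ n : ℕ, consObj W G (n + 1) →ₗ[S] consObj W G n
  | 0 => δ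
  | n + 1 => d n

/-- Splice a module onto the front of a resolution. -/
theorem HasFGPRRes.cons {S : Type u} [Ring S] (X W : ModuleCat.{v} S)
    (G : ℕ → ModuleCat.{v} S) (d : ∀ n : ℕ, G (n + 1) →ₗ[S] G n)
    (δ : G 0 →ₗ[S] W) (ε : W →ₗ[S] X) (hε : Function.Surjective ε)
    (h0 : LinearMap.range δ = LinearMap.ker ε)
    (h1 : LinearMap.range (d 0) = LinearMap.ker δ)
    (hd : ∀ n, LinearMap.range (d (n + 1)) = LinearMap.ker (d n))
    (hW : HasFGProjRes S W) (hG : ∀ n, HasFGProjRes S (G n)) : HasFGPRRes S X := by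
  refine ⟨consObj W G, consMap W G d δ, ε, hε, h0, ?_, ?_⟩
  · rintro (_ | n)
    · exact h1
    · exact hd n
  · rintro (_ | n)
    · exact hW
    · exact hG n

theorem HasFGPRRes.unfold {S : Type u} [Ring S] (X : ModuleCat.{v} S) (hX : HasFGPRRes S X) :
    ∃ (P : ModuleCat.{v} S) (f : P →ₗ[S] X),
      Module.Finite S P ∧ Module.Projective S P ∧ Function.Surjective f ∧
      HasFGPRRes S (ModuleCat.of S (LinearMap.ker f)) := by
  obtain ⟨G, d, ε, hε, h0, hd, hG⟩ := hX
  obtain ⟨P, f, hP1, hP2, hf, hK⟩ := (hG 0).unfold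
  refine ⟨P, ε ∘ₗ f, hP1, hP2, hε.comp hf, ?_⟩
  have hdd : ∀ n x, d n (d (n + 1) x) = 0 := fun n x => by
    have : d (n + 1) x ∈ LinearMap.ker (d n) := hd n ▸ LinearMap.mem_range_self _ x
    exact this
  have hεd : ∀ x, ε (d 0 x) = 0 := fun x => by
    have : d 0 x ∈ LinearMap.ker ε := h0 ▸ LinearMap.mem_range_self _ x
    exact this
  have hex0 : ∀ y, ε y = 0 → ∃ x, d 0 x = y := fun y hy => by
    have : y ∈ LinearMap.range (d 0) := h0 ▸ (LinearMap.mem_ker.2 hy)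
    exact this
  have hex : ∀ n y, d n y = 0 → ∃ x, d (n + 1) x = y := fun n y hy => by
    have : y ∈ LinearMap.range (d (n + 1)) := hd n ▸ (LinearMap.mem_ker.2 hy)
    exact this
  -- the pullback of `P` and `G 1` over `G 0`
  let W : Submodule S (P × G 1) :=
    LinearMap.eqLocus (f ∘ₗ LinearMap.fst S P (G 1)) (d 0 ∘ₗ LinearMap.snd S P (G 1))
  have hWm : ∀ a b, (a, b) ∈ W ↔ f a = d 0 b := fun a b => Iff.rfl
  let η : W →ₗ[S] LinearMap.ker (ε ∘ₗ f) :=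
    (LinearMap.fst S P (G 1) ∘ₗ W.subtype).codRestrict _ (fun x => by
      obtain ⟨⟨a, b⟩, hx⟩ := x
      rw [hWm] at hx
      change ε (f a) = 0
      rw [hx, hεd])
  let δ : G 2 →ₗ[S] W :=
    (LinearMap.inr S P (G 1) ∘ₗ d 1).codRestrict _ (fun x => by
      change f 0 = d 0 (d 1 x)
      rw [hdd, map_zero])
  let i : LinearMap.ker f →ₗ[S] W :=
    (LinearMap.inl S P (G 1) ∘ₗ (LinearMap.ker f).subtype).codRestrict _ (fun x => by
      change f x.1 = d 0 0
      rw [map_zero]; exact x.2)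
  let p : W →ₗ[S] G 1 := LinearMap.snd S P (G 1) ∘ₗ W.subtype
  refine HasFGPRRes.cons _ (ModuleCat.of S W) (fun n => G (n + 2)) (fun n => d (n + 2)) δ η
    ?_ ?_ ?_ (fun n => hd _) ?_ (fun n => hG _)
  · rintro ⟨a, ha⟩
    obtain ⟨b, hb⟩ := hex0 (f a) ha
    exact ⟨⟨(a, b), hb.symm⟩, rfl⟩
  · ext x
    constructor
    · rintro ⟨y, rfl⟩
      rfl
    · obtain ⟨⟨a, b⟩, hx⟩ := x
      intro h
      have ha : a = 0 := congrArg Subtype.val h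
      subst ha
      rw [hWm, map_zero] at hx
      obtain ⟨y, rfl⟩ := hex 0 b hx.symm
      exact ⟨y, rfl⟩
  · rw [LinearMap.ker_codRestrict, LinearMap.ker_comp_of_ker_eq_bot _
      (LinearMap.ker_eq_bot.2 LinearMap.inr_injective)]
    exact hd 1
  · refine HasFGProjRes.extension (ModuleCat.of S (LinearMap.ker f)) (ModuleCat.of S W) (G 1)
      i p ?_ ?_ ?_ hK (hG 1)
    · intro x y hxy
      have : (x.1, (0 : G 1)) = (y.1, (0 : G 1)) := congrArg Subtype.val hxy
      exact Subtype.ext (Prod.ext_iff.1 this).1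
    · intro b
      obtain ⟨a, ha⟩ := hf (d 0 b)
      exact ⟨⟨(a, b), ha⟩, rfl⟩
    · ext x
      constructor
      · rintro ⟨y, rfl⟩
        rfl
      · obtain ⟨⟨a, b⟩, hx⟩ := x
        intro h
        have hb : b = 0 := h
        subst hb
        rw [hWm, map_zero] at hx
        exact ⟨⟨a, hx⟩, rfl⟩

theorem hasFGProjRes_iff_resolution_by_fgpr (S : Type u) [Ring S]
    (X : Type v) [AddCommGroup X] [Module S X] :
    HasFGProjRes S X ↔
      ∃ (G : ℕ → ModuleCat.{v} S) (d : ∀ n : ℕ, G (n + 1) →ₗ[S] G n) (ε : G 0 →ₗ[S] X),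
        Function.Surjective ε ∧
        LinearMap.range (d 0) = LinearMap.ker ε ∧
        (∀ n, LinearMap.range (d (n + 1)) = LinearMap.ker (d n)) ∧
        ∀ n, HasFGProjRes S (G n) := by
  constructor
  · rintro ⟨P, d, ε, hfin, hproj, hs, h0, hd⟩
    exact ⟨P, d, ε, hs, h0, hd, fun n => HasFGProjRes.of_projective _ (hfin n) (hproj n)⟩
  · intro h
    exact HasFGProjRes.coind (HasFGPRRes S) HasFGPRRes.unfold (ModuleCat.of S X) h
end

section
/- Let θ : S → R be a ring extension admitting a reflexive homomorphism φ, and assume Ext^k_S(R,S) = 0 for all k ≥ 1 (where R is regarded as a left S-module via θ). Then for every left R-module X and every n ≥ 1 there is an isomorphism of abelian groups Ext^n_R(X,R) ≅ Ext^n_S(X,S), where on the right-hand side X is regarded as a left S-module via restriction of scalars. -/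
/- STATEMENT 14: Let θ : S → R be a ring extension with a reflexive homomorphism φ,
and assume Ext^k_S(R,S) = 0 for all k ≥ 1. Then for every left R-module X and n ≥ 1,
Ext^n_R(X,R) ≅ Ext^n_S(X,S) as abelian groups. -/

open CategoryTheory

universe u v

namespace ExtIsoAux

open Limits

section Compare

universe w v₁ u₁

variable {C : Type u₁} [Category.{v₁} C] [Abelian C] [HasExt.{w} C]

/-- two quotients of the same group with the same kernel -/
lemma nonempty_addEquiv_of_ker {A B D : Type*} [AddCommGroup A] [AddCommGroup B] [AddCommGroup D]
    (f : A →+ B) (g : A →+ D) (hf : Function.Surjective f) (hg : Function.Surjective g)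
    (h : ∀ a, f a = 0 ↔ g a = 0) : Nonempty (B ≃+ D) := by
  have hk : f.ker = g.ker := by
    ext a; exact h a
  exact ⟨(QuotientAddGroup.quotientKerEquivOfSurjective f hf).symm.trans
    ((QuotientAddGroup.quotientAddEquivOfEq hk).trans
      (QuotientAddGroup.quotientKerEquivOfSurjective g hg))⟩

lemma compare [EnoughProjectives C] (X Y : C) (n : ℕ) (hn : 1 ≤ n) :
    Nonempty ((((_root_.Ext ℤ C n).obj (Opposite.op X)).obj Y) ≃+ Abelian.Ext.{w} X Y n) := by
  obtain ⟨p, rfl⟩ : ∃ p, n = p + 1 := ⟨n - 1, by omega⟩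
  let P := projectiveResolution X
  let K := P.complex.linearYonedaObj ℤ Y
  let e₁ := (P.isoExt (R := ℤ) (p + 1) Y).toLinearEquiv.toAddEquiv
  let T := K.sc' p (p + 1) (p + 2)
  let e₂ := (K.isoSc' p (p + 1) (p + 2) (by simp) (by simp))
  let e₃ := (ShortComplex.homologyMapIso e₂).toLinearEquiv.toAddEquiv
  let e₄ := T.moduleCatHomologyIso.toLinearEquiv.toAddEquiv
  let A := LinearMap.ker T.g.hom
  let f : A →+ (A ⧸ LinearMap.range T.moduleCatToCycles) :=
    (LinearMap.range T.moduleCatToCycles).mkQ.toAddMonoidHom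
  have hA : ∀ a : A, P.complex.d (p + 2) (p + 1) ≫ (a.1 : P.complex.X (p + 1) ⟶ Y) = 0 :=
    fun a => a.2
  let g : A →+ Abelian.Ext.{w} X Y (p + 1) := AddMonoidHom.mk'
    (fun a => P.extMk (a.1 : P.complex.X (p + 1) ⟶ Y) (p + 2) rfl (hA a))
    (fun a b => (P.add_extMk _ _ _ _ (hA a) (hA b)).symm)
  have hf : Function.Surjective f := Submodule.mkQ_surjective _
  have hg : Function.Surjective g := by
    intro α
    obtain ⟨x, hx, rfl⟩ := P.extMk_surjective α (p + 2) rfl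
    exact ⟨⟨x, hx⟩, rfl⟩
  have hk : ∀ a, f a = 0 ↔ g a = 0 := by
    intro a
    refine ((Submodule.Quotient.mk_eq_zero _).trans ?_).trans
      (P.extMk_eq_zero_iff (a.1 : P.complex.X (p + 1) ⟶ Y) (p + 2) rfl (hA a) p rfl).symm
    constructor
    · rintro ⟨y, hy⟩
      exact ⟨y, congrArg Subtype.val hy⟩
    · rintro ⟨y, hy⟩
      exact ⟨y, Subtype.ext hy⟩
  obtain ⟨e₅⟩ := nonempty_addEquiv_of_ker f g hf hg hk
  exact ⟨e₁.trans (e₃.trans (e₄.trans e₅))⟩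

end Compare

section Adj

universe w w' v₁ v₂ u₁ u₂

open Abelian

variable {C : Type u₁} [Category.{v₁} C] [Abelian C] [HasExt.{w} C]
  {D : Type u₂} [Category.{v₂} D] [Abelian D] [HasExt.{w'} D] 
  {F : C ⥤ D} {G : D ⥤ C} [F.Additive] [PreservesFiniteLimits F] [PreservesFiniteColimits F]
  (adj : F ⊣ G)

/-- the comparison map -/
noncomputable def psi (X : C) (M : D) (n : ℕ) : Ext.{w} X (G.obj M) n →+ Ext.{w'} (F.obj X) M n :=
  AddMonoidHom.mk' (fun e => (e.mapExactFunctor F).comp (Ext.mk₀ (adj.counit.app M)) (add_zero n))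
    (fun a b => by simp)

lemma psi_apply (X : C) (M : D) (n : ℕ) (e : Ext.{w} X (G.obj M) n) :
    psi adj X M n e = (e.mapExactFunctor F).comp (Ext.mk₀ (adj.counit.app M)) (add_zero n) := rfl

lemma psi_zero_bij (X : C) (M : D) : Function.Bijective (psi.{w, w'} adj X M 0) := by
  have h : ∀ f : X ⟶ G.obj M, psi.{w, w'} adj X M 0 (Ext.mk₀ f) =
      Ext.mk₀ ((adj.homEquiv X M).symm f) := by
    intro f
    rw [psi_apply, Ext.mapExactFunctor_mk₀, Ext.mk₀_comp_mk₀, Adjunction.homEquiv_counit]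
  constructor
  · intro a b hab
    obtain ⟨a, rfl⟩ := (Ext.mk₀_bijective _ _).2 a
    obtain ⟨b, rfl⟩ := (Ext.mk₀_bijective _ _).2 b
    rw [h, h] at hab
    rw [(adj.homEquiv X M).symm.injective ((Ext.mk₀_bijective _ _).1 hab)]
  · intro y
    obtain ⟨y, rfl⟩ := (Ext.mk₀_bijective _ _).2 y
    exact ⟨Ext.mk₀ (adj.homEquiv X M y), by rw [h]; simp⟩

lemma psi_comp_mk₀ (X : C) {M N : D} (g : M ⟶ N) (n : ℕ) (e : Ext.{w} X (G.obj M) n) :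
    psi adj X N n (e.comp (Ext.mk₀ (G.map g)) (add_zero n)) =
      (psi.{w, w'} adj X M n e).comp (Ext.mk₀ g) (add_zero n) := by
  rw [psi_apply, psi_apply, Ext.mapExactFunctor_comp, Ext.mapExactFunctor_mk₀,
    Ext.comp_assoc_of_third_deg_zero, Ext.comp_assoc_of_third_deg_zero, Ext.mk₀_comp_mk₀,
    Ext.mk₀_comp_mk₀]
  exact congrArg (fun t => (Ext.mapExactFunctor F e).comp (Ext.mk₀ t) (add_zero n))
    (adj.counit_naturality g)

lemma psi_comp_ext (X : C) {M N : D} (n : ℕ) (e : Ext.{w} X (G.obj M) n)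
    (E : Ext.{w} (G.obj M) (G.obj N) 1) (E' : Ext.{w'} M N 1)
    (h : (E.mapExactFunctor F).comp (Ext.mk₀ (adj.counit.app N)) (add_zero 1) =
      (Ext.mk₀ (adj.counit.app M)).comp E' (zero_add 1)) :
    psi adj X N (n + 1) (e.comp E rfl) = (psi.{w, w'} adj X M n e).comp E' rfl := by
  rw [psi_apply, psi_apply, Ext.mapExactFunctor_comp, Ext.comp_assoc_of_third_deg_zero]
  refine (congrArg (fun t => (Ext.mapExactFunctor F e).comp t rfl) h).trans ?_
  exact (Ext.comp_assoc_of_second_deg_zero _ _ _ _).symm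

lemma psi_comp_extClass [G.PreservesZeroMorphisms] (X : C) {T : ShortComplex D} (hT : T.ShortExact)
    (hG : (T.map G).ShortExact) (n : ℕ) (e : Ext.{w} X (G.obj T.X₃) n) :
    psi adj X T.X₁ (n + 1) (e.comp hG.extClass rfl) =
      (psi.{w, w'} adj X T.X₃ n e).comp hT.extClass rfl := by
  let τ : (T.map G).map F ⟶ T :=
    { τ₁ := adj.counit.app T.X₁
      τ₂ := adj.counit.app T.X₂
      τ₃ := adj.counit.app T.X₃
      comm₁₂ := (adj.counit_naturality T.f).symm
      comm₂₃ := (adj.counit_naturality T.g).symm }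
  have := ShortComplex.ShortExact.extClass_naturality (hG.map_of_exact F) hT τ
  refine psi_comp_ext adj X n e hG.extClass hT.extClass ?_
  refine Eq.trans ?_ this
  exact congrArg (fun t => Ext.comp t (Ext.mk₀ (adj.counit.app T.X₁)) (add_zero 1))
    (Ext.mapExactFunctor_extClass F hG)

lemma psi_bij [G.PreservesZeroMorphisms] [EnoughInjectives D] (Q : D → Prop)
    (hI : ∀ I : D, Injective I → Q I)
    (hQ : ∀ T : ShortComplex D, T.ShortExact → Injective T.X₂ → Q T.X₁ →
      (T.map G).ShortExact ∧ Q T.X₃) (X : C) (n : ℕ) :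
    ∀ M : D, Q M → Function.Bijective (psi.{w, w'} adj X M n) := by
  induction n with
  | zero => exact fun M _ => psi_zero_bij adj X M
  | succ n ih =>
    intro M hM
    let T := ShortComplex.mk _ _ (cokernel.condition (Injective.ι M))
    have hT : T.ShortExact :=
      { exact := ShortComplex.exact_of_g_is_cokernel _ (cokernelIsCokernel T.f) }
    have inj : Injective T.X₂ := inferInstanceAs (Injective (Injective.under M))
    obtain ⟨hG, hC⟩ := hQ T hT inj hM
    have injG : Injective (T.map G).X₂ := Injective.injective_of_adjoint adj _
    constructor
    · rw [injective_iff_map_eq_zero]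
      intro x hx
      obtain ⟨x', rfl⟩ := Ext.covariant_sequence_exact₁ X hG x (Ext.eq_zero_of_injective _) rfl
      have h1 := psi_comp_extClass.{w, w'} adj X hT hG n x'
      have h2 : (psi.{w, w'} adj X T.X₃ n x').comp hT.extClass rfl = 0 := h1.symm.trans hx
      obtain ⟨z, hz⟩ := Ext.covariant_sequence_exact₃ _ hT _ rfl h2
      obtain ⟨y, rfl⟩ := (ih T.X₂ (hI _ inj)).2 z
      rw [← psi_comp_mk₀] at hz
      have h3 := (ih T.X₃ hC).1 hz
      rw [← h3]
      have := hG.comp_extClass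
      refine (Ext.comp_assoc_of_second_deg_zero (Y := (T.map G).X₂) y
        (Ext.mk₀ (T.map G).g) hG.extClass rfl).trans ?_
      rw [this]
      exact Ext.comp_zero (Y := (T.map G).X₂) y _ _ _ _
    · intro y
      obtain ⟨y', rfl⟩ := Ext.covariant_sequence_exact₁ _ hT y (Ext.eq_zero_of_injective _) rfl
      obtain ⟨x, rfl⟩ := (ih T.X₃ hC).2 y'
      exact ⟨_, psi_comp_extClass.{w, w'} adj X hT hG n x⟩

end Adj

section Main

open ModuleCat

variable {S R : Type u} [Ring S] [Ring R] (θ : S →+* R)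

instance : PreservesFiniteLimits (restrictScalars.{u} θ) := by
  have := ((Functor.exact_tfae (restrictScalars.{u} θ)).out 1 3).mp (fun T h => by
    rw [ShortComplex.ShortExact.moduleCat_exact_iff_function_exact] at h ⊢
    exact h)
  exact this.1

instance : PreservesFiniteColimits (restrictScalars.{u} θ) := by
  have := ((Functor.exact_tfae (restrictScalars.{u} θ)).out 1 3).mp (fun T h => by
    rw [ShortComplex.ShortExact.moduleCat_exact_iff_function_exact] at h ⊢
    exact h)
  exact this.2

/-- coextension is additive -/
instance : (coextendScalars.{u, u, u} θ).Additive :=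
  (restrictCoextendScalarsAdj.{u, u, u} θ).right_adjoint_additive

/-- acyclicity -/
def Acyc (M : ModuleCat.{u} S) : Prop :=
  ∀ k : ℕ, 1 ≤ k → Subsingleton
    (Abelian.Ext.{u} ((restrictScalars.{u} θ).obj (ModuleCat.of R R)) M k)

lemma acyc_inj (M : ModuleCat.{u} S) (h : Injective M) : Acyc θ M := by
  intro k hk
  obtain ⟨p, rfl⟩ : ∃ p, k = p + 1 := ⟨k - 1, by omega⟩
  exact Abelian.Ext.subsingleton_of_injective _ _ _

lemma acyc_step (T : ShortComplex (ModuleCat.{u} S)) (hT : T.ShortExact) (inj : Injective T.X₂)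
    (h1 : Acyc θ T.X₁) :
    (T.map (coextendScalars.{u, u, u} θ)).ShortExact ∧ Acyc θ T.X₃ := by
  constructor
  · have hm : Mono T.f := hT.mono_f
    have : PreservesLimitsOfSize.{0, 0} (coextendScalars.{u, u, u} θ) :=
      (restrictCoextendScalarsAdj.{u, u, u} θ).rightAdjoint_preservesLimits
    have hex := hT.exact.map_of_mono_of_preservesKernel (coextendScalars.{u, u, u} θ) hm
      inferInstance
    have hm' : Mono ((coextendScalars.{u, u, u} θ).map T.f) := inferInstance
    refine { exact := hex, mono_f := hm', epi_g := ?_ }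
    rw [ModuleCat.epi_iff_surjective]
    intro y
    let y' : (restrictScalars.{u} θ).obj (ModuleCat.of R R) ⟶ T.X₃ :=
      ModuleCat.ofHom (X := (restrictScalars.{u} θ).obj (ModuleCat.of R R))
        (CoextendScalars.equiv θ T.X₃ y)
    have := h1 1 le_rfl
    obtain ⟨z, hz⟩ := Abelian.Ext.covariant_sequence_exact₃ _ hT (Abelian.Ext.mk₀ y') (zero_add 1)
      (Subsingleton.elim _ _)
    obtain ⟨z, rfl⟩ := (Abelian.Ext.mk₀_bijective _ _).2 z
    rw [Abelian.Ext.mk₀_comp_mk₀] at hz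
    have hz' := (Abelian.Ext.mk₀_bijective _ _).1 hz
    refine ⟨(CoextendScalars.equiv θ T.X₂).symm z.hom, ?_⟩
    apply CoextendScalars.ext
    exact (ModuleCat.hom_ext_iff.1 hz' :)
  · intro k hk
    refine subsingleton_of_forall_eq 0 fun x => ?_
    have := h1 (k + 1) (by omega)
    obtain ⟨z, rfl⟩ := Abelian.Ext.covariant_sequence_exact₃ _ hT x rfl (Subsingleton.elim _ _)
    have := acyc_inj θ T.X₂ inj k hk
    rw [Subsingleton.elim z 0, Abelian.Ext.zero_comp]

/-- `R ≅ Hom_S(R,S)` -/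
lemma coextend_iso (φ : R → S) (hφ : IsReflexiveHom θ φ) :
    Nonempty (ModuleCat.of R R ≅ (coextendScalars.{u, u, u} θ).obj (ModuleCat.of S S)) := by
  obtain ⟨hadd, hl, -, hinj, hsurj, -, -⟩ := hφ
  let T (w : R) : (restrictScalars.{u} θ).obj (ModuleCat.of R R) →ₗ[S] ModuleCat.of S S :=
    { toFun := fun r : R => φ (r * w)
      map_add' := fun a b : R => by
        change φ ((a + b) * w) = _
        rw [add_mul, hadd]
      map_smul' := fun s (r : R) => by
        change φ ((θ s * r) * w) = s * φ (r * w)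
        rw [mul_assoc, hl] }
  let L : R →ₗ[R] (coextendScalars.{u, u, u} θ).obj (ModuleCat.of S S) :=
    { toFun := fun w => (CoextendScalars.equiv θ _).symm (T w)
      map_add' := fun a b => by
        apply CoextendScalars.ext
        refine LinearMap.ext fun r : R => ?_
        change φ (r * (a + b)) = φ (r * a) + φ (r * b)
        rw [mul_add, hadd]
      map_smul' := fun a b => by
        apply CoextendScalars.ext
        refine LinearMap.ext fun r : R => ?_
        change φ (r * (a * b)) = φ ((r * a) * b)
        rw [mul_assoc] }
  have hb : Function.Bijective L := by
    constructor
    · intro a b hab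
      apply hinj
      funext r
      exact congrArg (fun f => CoextendScalars.equiv θ _ f r) hab
    · intro y
      obtain ⟨w, hw⟩ := hsurj (fun r => CoextendScalars.equiv θ _ y r)
        ⟨fun a b => (CoextendScalars.equiv θ _ y).map_add a b,
          fun s r => (CoextendScalars.equiv θ _ y).map_smul s r⟩
      refine ⟨w, ?_⟩
      apply CoextendScalars.ext
      refine LinearMap.ext fun r : R => ?_
      exact (hw r).symm
  exact ⟨(LinearEquiv.ofBijective L hb).toModuleIso⟩

/-- restriction of scalars versus a compatible module structure -/
lemma restrict_iso (X : Type u) [AddCommGroup X] [Module R X]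
    [Module S X] (hX : ∀ (s : S) (x : X), s • x = θ s • x) :
    Nonempty ((restrictScalars.{u} θ).obj (ModuleCat.of R X) ≅ ModuleCat.of S X) := by
  let L : (restrictScalars.{u} θ).obj (ModuleCat.of R X) ≃ₗ[S] X :=
    { toFun := fun x => x
      invFun := fun x => x
      left_inv := fun _ => rfl
      right_inv := fun _ => rfl
      map_add' := fun _ _ => rfl
      map_smul' := fun s x => (hX s x).symm }
  exact ⟨L.toModuleIso⟩

end Main

end ExtIsoAux

theorem ext_iso_left {S R : Type u} [Ring S] [Ring R] (θ : S →+* R)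
    (φ : R → S) (hφ : IsReflexiveHom θ φ)
    [Module S R] (hR : ∀ (s : S) (r : R), s • r = θ s * r)
    (hvanish : ∀ k : ℕ, 1 ≤ k → Subsingleton
      (((Ext ℤ (ModuleCat.{u} S) k).obj
        (Opposite.op (ModuleCat.of S R))).obj (ModuleCat.of S S)))
    (X : Type u) [AddCommGroup X] [Module R X]
    [Module S X] (hX : ∀ (s : S) (x : X), s • x = θ s • x) :
    ∀ n : ℕ, 1 ≤ n → Nonempty
      ((((Ext ℤ (ModuleCat.{u} R) n).obj
          (Opposite.op (ModuleCat.of R X))).obj (ModuleCat.of R R)) ≃+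
       (((Ext ℤ (ModuleCat.{u} S) n).obj
          (Opposite.op (ModuleCat.of S X))).obj (ModuleCat.of S S))) := by
  intro n hn
  obtain ⟨eR⟩ := ExtIsoAux.restrict_iso θ R hR
  obtain ⟨eX⟩ := ExtIsoAux.restrict_iso θ X hX
  obtain ⟨eG⟩ := ExtIsoAux.coextend_iso θ φ hφ
  have hac : ExtIsoAux.Acyc θ (ModuleCat.of S S) := by
    intro k hk
    obtain ⟨c⟩ := ExtIsoAux.compare.{u}
      ((ModuleCat.restrictScalars.{u} θ).obj (ModuleCat.of R R)) (ModuleCat.of S S) k hk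
    have := hvanish k hk
    have e := ((((Ext ℤ (ModuleCat.{u} S) k).mapIso eR.op).app
      (ModuleCat.of S S)).toLinearEquiv.toAddEquiv)
    exact (e.trans c).symm.toEquiv.subsingleton
  have hb := ExtIsoAux.psi_bij.{u, u} (ModuleCat.restrictCoextendScalarsAdj.{u, u, u} θ)
    (ExtIsoAux.Acyc θ) (ExtIsoAux.acyc_inj θ) (ExtIsoAux.acyc_step θ) (ModuleCat.of R X) n
    (ModuleCat.of S S) hac
  obtain ⟨c₁⟩ := ExtIsoAux.compare.{u} (ModuleCat.of R X)
    ((ModuleCat.coextendScalars.{u, u, u} θ).obj (ModuleCat.of S S)) n hn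
  obtain ⟨c₂⟩ := ExtIsoAux.compare.{u}
    ((ModuleCat.restrictScalars.{u} θ).obj (ModuleCat.of R X)) (ModuleCat.of S S) n hn
  have e₁ := (((Ext ℤ (ModuleCat.{u} R) n).obj
    (Opposite.op (ModuleCat.of R X))).mapIso eG).toLinearEquiv.toAddEquiv
  have e₂ := ((((Ext ℤ (ModuleCat.{u} S) n).mapIso eX.op).app
      (ModuleCat.of S S)).toLinearEquiv.toAddEquiv)
  exact ⟨e₁.trans (c₁.trans ((AddEquiv.ofBijective _ hb).trans (c₂.symm.trans e₂.symm)))⟩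
end

section
/- Let θ : S → R be a ring extension admitting a reflexive homomorphism φ, and assume Ext^k_{Sᵒᵖ}(R,S) = 0 for all k ≥ 1 (where R is regarded as a right S-module via θ). Then for every left R-module X and every n ≥ 1 there is an isomorphism of abelian groups Ext^n_{Rᵒᵖ}(Hom_R(X,R), R) ≅ Ext^n_{Sᵒᵖ}(Hom_S(X,S), S), where Hom_R(X,R) is a right R-module via (f·a)(x) = f(x)·a and Hom_S(X,S) is a right S-module via (g·s)(x) = g(x)s. -/
/- STATEMENT 15: Let θ : S → R be a ring extension with a reflexive homomorphism φ,
and assume Ext^k_{Sᵒᵖ}(R,S) = 0 for all k ≥ 1. Then for every left R-module X and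
n ≥ 1, Ext^n_{Rᵒᵖ}(Hom_R(X,R), R) ≅ Ext^n_{Sᵒᵖ}(Hom_S(X,S), S) as abelian groups. -/

open CategoryTheory

universe u v

lemma addEquiv_of_surj {A B C D : Type*} [AddCommGroup A] [AddCommGroup B] [AddCommGroup C]
    [AddCommGroup D] (f : A →+ C) (g : B →+ D) (e : A ≃+ B) (hf : Function.Surjective f)
    (hg : Function.Surjective g) (h : ∀ a, f a = 0 ↔ g (e a) = 0) : Nonempty (C ≃+ D) := by
  refine ⟨(QuotientAddGroup.quotientKerEquivOfSurjective f hf).symm.trans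
    ((QuotientAddGroup.congr f.ker g.ker e ?_).trans
      (QuotientAddGroup.quotientKerEquivOfSurjective g hg))⟩
  ext b
  constructor
  · rintro ⟨a, ha, rfl⟩
    exact (h a).1 ha
  · intro hb
    refine ⟨e.symm b, (h _).2 ?_, by simp⟩
    simpa using hb

section compare
open Abelian
variable {C : Type*} [Category* C] [Abelian C] [EnoughProjectives C] [HasExt.{v} C]

lemma oldExt_equiv (X Y : C) (n : ℕ) :
    Nonempty ((((Ext ℤ C (n+1)).obj (Opposite.op X)).obj Y) ≃+ Abelian.Ext.{v} X Y (n+1)) := by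
  let P : ProjectiveResolution X := projectiveResolution X
  let K := P.complex.linearYonedaObj ℤ Y
  let e1 := (P.isoExt (R := ℤ) (n+1) Y) ≪≫ K.homologyIsoSc' n (n+1) (n+2) (by simp) (by simp) ≪≫
    (K.sc' n (n+1) (n+2)).moduleCatHomologyIso
  let T := K.sc' n (n+1) (n+2)
  let g : LinearMap.ker T.g.hom →+ Abelian.Ext.{v} X Y (n+1) :=
    AddMonoidHom.mk' (fun f => P.extMk (n := n+1) (show P.complex.X (n+1) ⟶ Y from f.1) (n+2) rfl
      (LinearMap.mem_ker.1 f.2)) (fun a b => by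
        exact (P.add_extMk _ _ _ _ _ _).symm)
  obtain ⟨e2⟩ := addEquiv_of_surj (LinearMap.range T.moduleCatToCycles).mkQ.toAddMonoidHom g
    (AddEquiv.refl _) (Submodule.mkQ_surjective _) (by
      intro α
      obtain ⟨f, hf, rfl⟩ := P.extMk_surjective α (n+2) rfl
      exact ⟨⟨f, hf⟩, rfl⟩) (by
      intro a
      have hz := P.extMk_eq_zero_iff (n := n+1) (show P.complex.X (n+1) ⟶ Y from a.1) (n+2) rfl
        (LinearMap.mem_ker.1 a.2) n rfl
      have hq : (LinearMap.range T.moduleCatToCycles).mkQ a = 0 ↔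
        a ∈ LinearMap.range T.moduleCatToCycles := Submodule.Quotient.mk_eq_zero _
      refine hq.trans (Iff.trans ?_ hz.symm)
      constructor
      · rintro ⟨b, rfl⟩
        exact ⟨b, rfl⟩
      · rintro ⟨b, hb⟩
        exact ⟨b, Subtype.ext hb⟩)
  exact ⟨e1.toLinearEquiv.toAddEquiv.trans e2⟩

end compare

section adj
open Abelian Limits
variable {C : Type*} [Category* C] [Abelian C] {D : Type*} [Category* D] [Abelian D]
  [HasExt.{v} C] [HasExt.{v} D] [EnoughInjectives D]

/-- the connecting map from `Hom` to `Ext¹` -/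
noncomputable def conn (X : C) {S : ShortComplex C} (hS : S.ShortExact) :
    (X ⟶ S.X₃) →+ Abelian.Ext.{v} X S.X₁ 1 :=
  (hS.extClass.postcomp X (zero_add 1)).comp Ext.addEquiv₀.symm.toAddMonoidHom

lemma conn_apply (X : C) {S : ShortComplex C} (hS : S.ShortExact) (f : X ⟶ S.X₃) :
    conn.{v} X hS f = (Ext.mk₀ f).comp hS.extClass (zero_add 1) := rfl

lemma conn_eq_zero_iff (X : C) {S : ShortComplex C} (hS : S.ShortExact) (f : X ⟶ S.X₃) :
    conn.{v} X hS f = 0 ↔ ∃ g : X ⟶ S.X₂, g ≫ S.g = f := by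
  rw [conn_apply]
  constructor
  · intro h
    obtain ⟨x, hx⟩ := Ext.covariant_sequence_exact₃ X hS (Ext.mk₀ f) (zero_add 1) h
    obtain ⟨g, rfl⟩ := (Ext.mk₀_bijective _ _).2 x
    refine ⟨g, (Ext.mk₀_bijective _ _).1 ?_⟩
    simpa using hx
  · rintro ⟨g, rfl⟩
    rw [← Ext.mk₀_comp_mk₀, Ext.comp_assoc _ _ _ (zero_add 0) (zero_add 1) (by simp),
      hS.comp_extClass, Ext.comp_zero]

lemma conn_surjective (X : C) {S : ShortComplex C} (hS : S.ShortExact) [Injective S.X₂] :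
    Function.Surjective (conn.{v} X hS) := by
  intro y
  obtain ⟨x, rfl⟩ := Ext.covariant_sequence_exact₁ X hS y (Ext.eq_zero_of_injective _) (zero_add 1)
  obtain ⟨f, rfl⟩ := (Ext.mk₀_bijective _ _).2 x
  exact ⟨f, rfl⟩

lemma shift_bijective (X : C) {S : ShortComplex C} (hS : S.ShortExact) [Injective S.X₂] (n : ℕ) :
    Function.Bijective (hS.extClass.postcomp X (rfl : (n + 1) + 1 = n + 2)) := by
  constructor
  · rw [injective_iff_map_eq_zero]
    intro x hx
    obtain ⟨y, rfl⟩ := Ext.covariant_sequence_exact₃ X hS x rfl hx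
    rw [Ext.eq_zero_of_injective y, Ext.zero_comp]
  · intro y
    exact Ext.covariant_sequence_exact₁ X hS y (Ext.eq_zero_of_injective _) rfl

lemma ext_adj {F : C ⥤ D} {G : D ⥤ C} (adj : F ⊣ G) [F.PreservesMonomorphisms] [F.Additive]
    (A : D)
    (hG : ∀ {Y Z : D} (g : Y ⟶ Z), (∀ a : A ⟶ Z, ∃ b, b ≫ g = a) → Epi (G.map g))
    (M : C) (n : ℕ) : ∀ (Y : D) (_ : ∀ k, Subsingleton (Abelian.Ext.{v} A Y (k + 1))),
    Nonempty (Abelian.Ext.{v} M (G.obj Y) (n + 1) ≃+ Abelian.Ext.{v} (F.obj M) Y (n + 1)) := by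
  have : G.Additive := adj.right_adjoint_additive
  have := adj.rightAdjoint_preservesLimits
  have key : ∀ (Y : D) (_ : ∀ k, Subsingleton (Abelian.Ext.{v} A Y (k + 1))),
      ∃ (S : ShortComplex D) (hS : S.ShortExact), S.X₁ = Y ∧ Injective S.X₂ ∧
        (S.map G).ShortExact ∧ Injective (S.map G).X₂ ∧
        ∀ k, Subsingleton (Abelian.Ext.{v} A S.X₃ (k + 1)) := by
    intro Y hY
    let I : InjectivePresentation Y := Classical.arbitrary _
    have := I.injective
    let S := ShortComplex.mk _ _ (cokernel.condition I.f)
    have hS : S.ShortExact := { exact := ShortComplex.exact_cokernel I.f }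
    have hI : Injective S.X₂ := I.injective
    refine ⟨S, hS, rfl, hI, ?_, ?_, ?_⟩
    · have hepi : Epi (G.map S.g) := hG _ fun a =>
        (conn_eq_zero_iff.{v} A hS a).1 ((hY 0).elim _ _)
      have : Mono S.f := hS.mono_f
      have h := (hS.exact.map_of_mono_of_preservesKernel G inferInstance inferInstance)
      exact { exact := h
              mono_f := inferInstanceAs (Mono (G.map S.f))
              epi_g := hepi }
    · exact Injective.injective_of_adjoint adj S.X₂
    · intro k
      have b := shift_bijective A hS k
      have : Subsingleton (Abelian.Ext.{v} A S.X₁ (k+2)) := hY (k+1)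
      exact b.1.subsingleton
  induction n with
  | zero =>
    intro Y hY
    obtain ⟨S, hS, rfl, i1, hGS, i2, h3⟩ := key Y hY
    refine addEquiv_of_surj (conn.{v} M hGS) (conn.{v} (F.obj M) hS)
      (adj.homAddEquiv M S.X₃).symm (conn_surjective _ _) (conn_surjective _ _) ?_
    intro a
    refine (conn_eq_zero_iff.{v} M hGS a).trans (Iff.trans ?_ (conn_eq_zero_iff.{v} _ hS _).symm)
    constructor
    · rintro ⟨g, rfl⟩
      exact ⟨(adj.homEquiv _ _).symm g, (adj.homEquiv_naturality_right_symm _ _).symm⟩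
    · rintro ⟨g, hg⟩
      refine ⟨adj.homEquiv _ _ g, ?_⟩
      refine (adj.homEquiv_naturality_right _ _).symm.trans ?_
      rw [hg]
      exact (adj.homEquiv _ _).apply_symm_apply a
  | succ n ih =>
    intro Y hY
    obtain ⟨S, hS, rfl, i1, hGS, i2, h3⟩ := key Y hY
    obtain ⟨e⟩ := ih S.X₃ h3
    exact ⟨(AddEquiv.ofBijective _ (shift_bijective M hGS n)).symm.trans
      (e.trans (AddEquiv.ofBijective _ (shift_bijective (F.obj M) hS n)))⟩

end adj

/-- transport of `Ext` along isomorphisms -/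
noncomputable def oldExtCongr {C : Type*} [Category* C] [Abelian C] [EnoughProjectives C]
    {X X' Y Y' : C} (e : X ≅ X') (e' : Y ≅ Y') (n : ℕ) :
    (((Ext ℤ C n).obj (Opposite.op X)).obj Y) ≃+ (((Ext ℤ C n).obj (Opposite.op X')).obj Y') :=
  (((Ext ℤ C n).mapIso e.symm.op).app Y ≪≫
    ((Ext ℤ C n).obj (Opposite.op X')).mapIso e').toLinearEquiv.toAddEquiv

theorem ext_iso_right {S R : Type u} [Ring S] [Ring R] (θ : S →+* R)
    (φ : R → S) (hφ : IsReflexiveHom θ φ)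
    [Module Sᵐᵒᵖ R] (hR' : ∀ (s : S) (r : R), MulOpposite.op s • r = r * θ s)
    (hvanish : ∀ k : ℕ, 1 ≤ k → Subsingleton
      (((Ext ℤ (ModuleCat.{u} Sᵐᵒᵖ) k).obj
        (Opposite.op (ModuleCat.of Sᵐᵒᵖ R))).obj (ModuleCat.of Sᵐᵒᵖ S)))
    (X : Type u) [AddCommGroup X] [Module R X]
    [Module S X] (hX : ∀ (s : S) (x : X), s • x = θ s • x) :
    ∀ n : ℕ, 1 ≤ n → Nonempty
      ((((Ext ℤ (ModuleCat.{u} Rᵐᵒᵖ) n).obj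
          (Opposite.op (ModuleCat.of Rᵐᵒᵖ (X →ₗ[R] R)))).obj (ModuleCat.of Rᵐᵒᵖ R)) ≃+
       (((Ext ℤ (ModuleCat.{u} Sᵐᵒᵖ) n).obj
          (Opposite.op (ModuleCat.of Sᵐᵒᵖ (X →ₗ[S] S)))).obj (ModuleCat.of Sᵐᵒᵖ S))) := by
  obtain ⟨hadd, hl, hr, hlinj, hlex, hrinj, hrex⟩ := hφ
  intro n hn
  obtain ⟨n, rfl⟩ := Nat.exists_eq_add_of_le' hn
  let f : Sᵐᵒᵖ →+* Rᵐᵒᵖ := θ.op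
  let F := ModuleCat.restrictScalars.{u} f
  let G := ModuleCat.coextendScalars.{u, u, u} f
  let adj : F ⊣ G := ModuleCat.restrictCoextendScalarsAdj.{u, u, u} f
  let A : ModuleCat.{u} Sᵐᵒᵖ := F.obj (ModuleCat.of Rᵐᵒᵖ Rᵐᵒᵖ)
  let eA : A ≃ₗ[Sᵐᵒᵖ] R :=
    { toFun := fun r : Rᵐᵒᵖ => r.unop
      invFun := fun r : R => (MulOpposite.op r : Rᵐᵒᵖ)
      map_add' := fun _ _ => rfl
      map_smul' := fun s r => (hR' s.unop (MulOpposite.unop (α := R) r)).symm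
      left_inv := fun _ => rfl
      right_inv := fun _ => rfl }
  let isoA : A ≅ ModuleCat.of Sᵐᵒᵖ R := eA.toModuleIso
  let toG : R →ₗ[Rᵐᵒᵖ] G.obj (ModuleCat.of Sᵐᵒᵖ S) :=
    { toFun := fun w => (ModuleCat.CoextendScalars.equiv f _).symm
        { toFun := fun r : Rᵐᵒᵖ => φ (w * r.unop)
          map_add' := fun a b => by
            refine Eq.trans ?_ (hadd _ _)
            exact congrArg φ (mul_add w _ _)
          map_smul' := fun s (r : Rᵐᵒᵖ) => by
            refine Eq.trans ?_ (hr s.unop (w * r.unop))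
            exact congrArg φ (mul_assoc w _ _).symm }
      map_add' := fun a b => (ModuleCat.CoextendScalars.equiv f _).injective
        (LinearMap.ext fun r : Rᵐᵒᵖ => by
          refine Eq.trans ?_ (hadd _ _)
          exact congrArg φ (add_mul a b _))
      map_smul' := fun a b => (ModuleCat.CoextendScalars.equiv f _).injective
        (LinearMap.ext fun r : Rᵐᵒᵖ => congrArg φ (mul_assoc b _ _)) }
  have toGbij : Function.Bijective toG := by
    constructor
    · intro a b hab
      apply hrinj
      funext r
      exact LinearMap.congr_fun (congrArg (ModuleCat.CoextendScalars.equiv f _) hab)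
        (MulOpposite.op r : Rᵐᵒᵖ)
    · intro g
      let g' := ModuleCat.CoextendScalars.equiv f _ g
      obtain ⟨w, hw⟩ := hrex (fun r => g' (MulOpposite.op r : Rᵐᵒᵖ))
        ⟨fun a b => g'.map_add (MulOpposite.op a : Rᵐᵒᵖ) (MulOpposite.op b : Rᵐᵒᵖ),
          fun s r => g'.map_smul (MulOpposite.op s) (MulOpposite.op r : Rᵐᵒᵖ)⟩
      refine ⟨w, (ModuleCat.CoextendScalars.equiv f _).injective
        (LinearMap.ext fun r : Rᵐᵒᵖ => (hw r.unop).symm)⟩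
  let isoG : ModuleCat.of Rᵐᵒᵖ R ≅ G.obj (ModuleCat.of Sᵐᵒᵖ S) :=
    (LinearEquiv.ofBijective toG toGbij).toModuleIso
  let M := ModuleCat.of Rᵐᵒᵖ (X →ₗ[R] R)
  let toM : F.obj M →ₗ[Sᵐᵒᵖ] (X →ₗ[S] S) :=
    { toFun := fun h : X →ₗ[R] R =>
        { toFun := fun x => φ (h x)
          map_add' := fun a b => by rw [map_add, hadd]
          map_smul' := fun s x => by rw [hX, map_smul, smul_eq_mul, hl]; rfl }
      map_add' := fun a b => LinearMap.ext fun x => hadd _ _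
      map_smul' := fun s h => LinearMap.ext fun x => hr _ _ }
  have toMbij : Function.Bijective toM := by
    constructor
    · intro (a : X →ₗ[R] R) (b : X →ₗ[R] R) hab
      refine LinearMap.ext fun x => ?_
      apply hlinj
      funext r
      have := LinearMap.congr_fun hab (r • x)
      change φ (a (r • x)) = φ (b (r • x)) at this
      simpa using this
    · intro g
      have hex : ∀ x : X, ∃ w : R, ∀ r : R, g (r • x) = φ (r * w) := fun x =>
        hlex (fun r => g (r • x)) ⟨fun a b => by rw [add_smul, map_add],
          fun s r => by rw [mul_smul, ← hX, map_smul, smul_eq_mul]⟩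
      choose w hw using hex
      have huniq : ∀ (x : X) (w' : R), (∀ r : R, g (r • x) = φ (r * w')) → w x = w' := by
        intro x w' h
        apply hlinj
        funext r
        exact (hw x r).symm.trans (h r)
      let h : X →ₗ[R] R :=
        { toFun := w
          map_add' := fun a b => huniq _ _ fun r => by
            rw [smul_add, map_add, hw, hw, mul_add, hadd]
          map_smul' := fun a x => huniq _ _ fun r => by
            rw [smul_smul, hw]; simp [mul_assoc] }
      refine ⟨h, LinearMap.ext fun x => ?_⟩
      have := hw x 1
      rw [one_smul, one_mul] at this
      exact this.symm
  let isoM : F.obj M ≅ ModuleCat.of Sᵐᵒᵖ (X →ₗ[S] S) :=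
    (LinearEquiv.ofBijective toM toMbij).toModuleIso
  have hA : ∀ k, Subsingleton (Abelian.Ext.{u} A (ModuleCat.of Sᵐᵒᵖ S) (k + 1)) := by
    intro k
    obtain ⟨e⟩ := oldExt_equiv.{u} A (ModuleCat.of Sᵐᵒᵖ S) k
    have := hvanish (k + 1) (by omega)
    exact (e.symm.trans (oldExtCongr isoA (Iso.refl _) (k + 1))).injective.subsingleton
  have hG : ∀ {Y Z : ModuleCat.{u} Sᵐᵒᵖ} (g : Y ⟶ Z),
      (∀ a : A ⟶ Z, ∃ b, b ≫ g = a) → Epi (G.map g) := by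
    intro Y Z g hg
    rw [ModuleCat.epi_iff_surjective]
    intro z
    obtain ⟨b, hb⟩ := hg (ModuleCat.ofHom (X := A) (ModuleCat.CoextendScalars.equiv f _ z))
    refine ⟨(ModuleCat.CoextendScalars.equiv f _).symm b.hom,
      (ModuleCat.CoextendScalars.equiv f _).injective ?_⟩
    exact congrArg ModuleCat.Hom.hom hb
  have : F.PreservesMonomorphisms := ⟨fun {Y Z} g hg => by
    rw [ModuleCat.mono_iff_injective] at hg ⊢
    exact hg⟩
  obtain ⟨e⟩ := ext_adj.{u} adj A hG M n _ hA
  obtain ⟨e1⟩ := oldExt_equiv.{u} M (G.obj (ModuleCat.of Sᵐᵒᵖ S)) n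
  obtain ⟨e2⟩ := oldExt_equiv.{u} (F.obj M) (ModuleCat.of Sᵐᵒᵖ S) n
  exact ⟨(oldExtCongr (Iso.refl M) isoG (n + 1)).trans (e1.trans (e.trans
    (e2.symm.trans (oldExtCongr isoM (Iso.refl _) (n + 1)))))⟩
end

section
/- Let θ : S → R be a ring extension admitting a reflexive homomorphism φ (so θ is a Frobenius-type extension in the regular case), and assume that the left S-module R (via restriction of scalars along θ) is finitely generated projective. Then the right S-module R (via restriction of scalars along θ) is finitely generated projective. -/
/- STATEMENT 16: Let θ : S → R be a ring extension with a reflexive homomorphism φ.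
If the left S-module R (via θ) is finitely generated projective, then the right
S-module R (via θ) is finitely generated projective. -/

universe u v

theorem frobenius_left_right
    {S : Type u} {R : Type v} [Ring S] [Ring R] (θ : S →+* R)
    (φ : R → S) (hφ : IsReflexiveHom θ φ)
    [Module S R] (hR : ∀ (s : S) (r : R), s • r = θ s * r)
    [Module Sᵐᵒᵖ R] (hR' : ∀ (s : S) (r : R), MulOpposite.op s • r = r * θ s)
    (hfin : Module.Finite S R) (hproj : Module.Projective S R) :
    Module.Finite Sᵐᵒᵖ R ∧ Module.Projective Sᵐᵒᵖ R := by
  obtain ⟨hadd, hl, hr, hinj, hsurj, -, -⟩ := hφ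
  obtain ⟨n, f, g, -, -, hfg⟩ := Module.Finite.exists_comp_eq_id_of_projective S R
  have hw : ∀ i, ∃ w : R, ∀ r, g r i = φ (r * w) := by
    intro i
    refine hsurj (fun r => g r i) ⟨?_, ?_⟩
    · intro a b
      simp
    · intro s r
      simp [← hR]
  choose w hw using hw
  let φ' : R →+ S := AddMonoidHom.mk' φ hadd
  have hφ' : ∀ r, φ r = φ' r := fun r => rfl
  have hsum : ∀ h : Fin n → R, φ (∑ i, h i) = ∑ i, φ (h i) := fun h => map_sum φ' h _
  let x : Fin n → R := fun i => f (Pi.single i 1)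
  have hx : ∀ r : R, r = ∑ i, θ (φ (r * w i)) * x i := by
    intro r
    have h1 : f (g r) = r := LinearMap.congr_fun hfg r
    conv_lhs => rw [← h1, pi_eq_sum_univ' (g r), map_sum]
    refine Finset.sum_congr rfl fun i _ => ?_
    rw [map_smul, hR, hw]
  have hy : ∀ r : R, ∑ i, w i * θ (φ (x i * r)) = r := by
    intro r
    apply hinj
    funext t
    change φ (t * ∑ i, w i * θ (φ (x i * r))) = φ (t * r)
    conv_rhs => rw [hx t, Finset.sum_mul, hsum]
    rw [Finset.mul_sum, hsum]
    refine Finset.sum_congr rfl fun i _ => ?_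
    rw [← mul_assoc, hr, mul_assoc (θ _), hl]
  let F : (Fin n → Sᵐᵒᵖ) →ₗ[Sᵐᵒᵖ] R := Fintype.linearCombination Sᵐᵒᵖ w
  let G : R →ₗ[Sᵐᵒᵖ] (Fin n → Sᵐᵒᵖ) :=
    { toFun := fun r i => MulOpposite.op (φ (x i * r))
      map_add' := by
        intro a b
        funext i
        simp [mul_add, hadd]
      map_smul' := by
        intro s r
        funext i
        obtain ⟨s, rfl⟩ := MulOpposite.op_surjective s
        simp [hR', ← mul_assoc, hr] }
  have hFG : ∀ r, F (G r) = r := by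
    intro r
    simp only [F, Fintype.linearCombination_apply]
    conv_rhs => rw [← hy r]
    exact Finset.sum_congr rfl fun i _ => hR' _ _
  exact ⟨Module.Finite.of_surjective F fun r => ⟨G r, hFG r⟩,
    Module.Projective.of_split G F (LinearMap.ext hFG)⟩
end

section
/- Let S be a commutative ring and P an invertible S-module, i.e. there exists an S-module Q with an S-linear isomorphism P ⊗_S Q ≅ S. Then for every S-module X: the evaluation map ev_X : X → Hom_S(Hom_S(X,S), S), ev_X(x)(f) = f(x), is bijective if and only if the evaluation map ev^P_X : X → Hom_S(Hom_S(X,P), P), ev^P_X(x)(f) = f(x), is bijective; and ev_X is injective if and only if ev^P_X is injective. -/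
/- STATEMENT 17: Let S be a commutative ring and P an invertible S-module (there is an
S-module Q with P ⊗_S Q ≅ S). Then for every S-module X, the evaluation map
ev_X : X → Hom_S(Hom_S(X,S),S) is bijective iff the evaluation map
ev^P_X : X → Hom_S(Hom_S(X,P),P) is bijective, and ev_X is injective iff ev^P_X is. -/

universe u v w x

open TensorProduct

/-- The evaluation map `X → Hom_S(Hom_S(X,P), P)` with values in `P`, `x ↦ (f ↦ f x)`. -/
def evalFunP (S : Type u) [CommRing S] (X : Type v) [AddCommGroup X] [Module S X]
    (P : Type w) [AddCommGroup P] [Module S P] :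
    X → ((X →ₗ[S] P) →ₗ[S] P) := fun x =>
  { toFun := fun f => f x
    map_add' := fun _ _ => rfl
    map_smul' := fun _ _ => rfl }

theorem inv_swap {S : Type u} [CommRing S] {P : Type w} [AddCommGroup P] [Module S P]
    [Module.Invertible S P] (φ : P →ₗ[S] S) (p q : P) : φ p • q = φ q • p := by
  have h : p ⊗ₜ[S] q = q ⊗ₜ[S] p := Module.Invertible.tmul_comm
  simpa using congrArg (fun t => TensorProduct.lid S P (φ.rTensor P t)) h

theorem inv_sum (S : Type u) [CommRing S] (P : Type w) [AddCommGroup P] [Module S P]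
    [Module.Invertible S P] :
    ∃ s : Finset ((P →ₗ[S] S) × P), ∑ i ∈ s, i.1 i.2 = 1 := by
  obtain ⟨s, hs⟩ := TensorProduct.exists_finset ((Module.Invertible.linearEquiv S P).symm 1)
  refine ⟨s, ?_⟩
  have := (LinearEquiv.symm_apply_eq _).mp hs
  simp [Module.Invertible.linearEquiv] at this
  exact this.symm

theorem reflexive_iff_P_reflexive
    (S : Type u) [CommRing S]
    (P : Type w) [AddCommGroup P] [Module S P]
    -- P is invertible: there is an S-module Q with P ⊗[S] Q ≅ S
    (Q : Type x) [AddCommGroup Q] [Module S Q] (e : (P ⊗[S] Q) ≃ₗ[S] S)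
    (X : Type v) [AddCommGroup X] [Module S X] :
    (Function.Bijective (evalFunP S X S) ↔ Function.Bijective (evalFunP S X P)) ∧
    (Function.Injective (evalFunP S X S) ↔ Function.Injective (evalFunP S X P)) := by
  have : Module.Invertible S P := Module.Invertible.left e
  obtain ⟨s, hs⟩ := inv_sum S P
  have basis : ∀ p : P, p = ∑ i ∈ s, i.1 p • i.2 := fun p => by
    simp_rw [inv_swap _ p _]
    rw [← Finset.sum_smul, hs, one_smul]
  have faith : ∀ a b : S, (∀ p : P, a • p = b • p) → a = b := fun a b h => by
    have h2 : ∀ i ∈ s, a * i.1 i.2 = b * i.1 i.2 := fun i _ => by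
      simpa using congrArg i.1 (h i.2)
    simpa [← Finset.mul_sum, hs] using Finset.sum_congr rfl h2
  have inj : Function.Injective (evalFunP S X S) ↔ Function.Injective (evalFunP S X P) := by
    constructor
    · intro h x y hxy
      refine h (LinearMap.ext fun f => faith _ _ fun p => ?_)
      exact LinearMap.congr_fun hxy (f.smulRight p)
    · intro h x y hxy
      refine h (LinearMap.ext fun g => ?_)
      change g x = g y
      rw [basis (g x), basis (g y)]
      refine Finset.sum_congr rfl fun i _ => ?_
      have : i.1 (g x) = i.1 (g y) := LinearMap.congr_fun hxy (i.1.comp g)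
      rw [this]
  have surj : Function.Surjective (evalFunP S X S) ↔ Function.Surjective (evalFunP S X P) := by
    constructor
    · intro h Φ
      let Ψ : (X →ₗ[S] S) →ₗ[S] S :=
        ∑ i ∈ s, i.1 ∘ₗ Φ ∘ₗ (LinearMap.smulRightₗ (R := S) (M₂ := X) (M := P)).flip i.2
      have hΨ : ∀ f, Ψ f = ∑ i ∈ s, i.1 (Φ (f.smulRight i.2)) := fun f => by
        simp only [Ψ, LinearMap.sum_apply]; rfl
      obtain ⟨x, hx⟩ := h Ψ
      refine ⟨x, LinearMap.ext fun g => ?_⟩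
      change g x = Φ g
      have key : ∀ (f : X →ₗ[S] S) (p : P), f x • p = Φ (f.smulRight p) := fun f p => by
        have h1 : f x = Ψ f := LinearMap.congr_fun hx f
        rw [h1, hΨ, Finset.sum_smul]
        simp_rw [inv_swap _ _ p, ← map_smul]
        rw [← map_sum]
        congr 1
        ext y
        simp only [LinearMap.sum_apply, LinearMap.smul_apply, LinearMap.smulRight_apply]
        simp_rw [smul_comm _ (f y)]
        rw [← Finset.smul_sum, ← basis]
      have hg : g = ∑ i ∈ s, (i.1.comp g).smulRight i.2 := by
        ext y
        simpa using basis (g y)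
      rw [basis (g x)]
      conv_rhs => rw [hg, map_sum]
      exact Finset.sum_congr rfl fun i _ => key (i.1.comp g) i.2
    · intro h Ψ
      let Φ : (X →ₗ[S] P) →ₗ[S] P :=
        ∑ i ∈ s, (Ψ ∘ₗ LinearMap.compRight S i.1).smulRight i.2
      have hΦ : ∀ g, Φ g = ∑ i ∈ s, Ψ (i.1.comp g) • i.2 := fun f => by
        simp only [Φ, LinearMap.sum_apply]; rfl
      obtain ⟨x, hx⟩ := h Φ
      refine ⟨x, LinearMap.ext fun f => faith _ _ fun p => ?_⟩
      have h1 : f x • p = Φ (f.smulRight p) := LinearMap.congr_fun hx (f.smulRight p)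
      change f x • p = _
      rw [h1, hΦ]
      conv_rhs => rw [basis p, Finset.smul_sum]
      refine Finset.sum_congr rfl fun i _ => ?_
      have : i.1.comp (f.smulRight p) = i.1 p • f := by
        ext y; simp [mul_comm]
      rw [this, map_smul, smul_eq_mul, mul_comm, mul_smul]
  exact ⟨and_congr inj surj, inj⟩
end
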